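/- arXiv:2310.09071 — 6 statements merged into one kernel-verified Lean document; each statement's English description precedes it below -/
import Mathlib

section
/- In the stylized fleet model, for every horizon t̄, every interval t ∈ {1,…,t̄}, every demand profile D, and every initial vehicle distribution N⁰ : R → ℝ≥0, the full-matching value equals the relaxed value: V_t(N⁰; D) = V̂_t(N⁰; D). That is, imposing the full-matching requirement (every vacant vehicle must serve a waiting customer whenever one is available at its node) does not reduce the maximum achievable number of completed requests; this is the content of Proposition 1 (zero Lagrangian duality gap of SLM in the stylized case). -/
/-!
Stylized fleet model (Proposition 1 of "Online Relocating and Matching of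
Ride-Hailing Services: A Model-Based Modular Approach").
-/

open Finset

/-- A relaxed policy in the stylized fleet model: matched flows `M`, relocation
flows `E` and induced vehicle distributions `N` over intervals `t, …, tbar`,
starting from the initial distribution `N0`. -/
def IsRelaxedPolicy (R : Type*) [Fintype R] (tbar t : ℕ) (D : ℕ → R → R → ℝ)
    (N0 : R → ℝ) (M E : ℕ → R → R → ℝ) (N : ℕ → R → ℝ) : Prop :=
  (∀ i, N t i = N0 i) ∧
  (∀ s ∈ Finset.Icc t tbar, ∀ j, N (s + 1) j = ∑ i, (M s i j + E s i j)) ∧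
  (∀ s ∈ Finset.Icc t tbar, ∀ i j, 0 ≤ M s i j) ∧
  (∀ s ∈ Finset.Icc t tbar, ∀ i j, 0 ≤ E s i j) ∧
  (∀ s ∈ Finset.Icc t tbar, ∀ i j, M s i j ≤ D s i j) ∧
  (∀ s ∈ Finset.Icc t tbar, ∀ i, ∑ j, (M s i j + E s i j) = N s i)

/-- A full-matching policy: a relaxed policy in which, at every node and
interval, every vacant vehicle serves a waiting customer whenever one is
available. -/
def IsFullMatchingPolicy (R : Type*) [Fintype R] (tbar t : ℕ) (D : ℕ → R → R → ℝ)
    (N0 : R → ℝ) (M E : ℕ → R → R → ℝ) (N : ℕ → R → ℝ) : Prop :=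
  IsRelaxedPolicy R tbar t D N0 M E N ∧
  ∀ s ∈ Finset.Icc t tbar, ∀ i, ∑ j, M s i j = min (N s i) (∑ j, D s i j)

/-- The objective of a policy: the total number of completed requests over
intervals `t, …, tbar`. -/
noncomputable def policyObj (R : Type*) [Fintype R] (tbar t : ℕ)
    (M : ℕ → R → R → ℝ) : ℝ :=
  ∑ s ∈ Finset.Icc t tbar, ∑ i, ∑ j, M s i j

/-- The relaxed value `V̂_t(N0; D)`. -/
noncomputable def relaxedValue (R : Type*) [Fintype R] (tbar t : ℕ)
    (D : ℕ → R → R → ℝ) (N0 : R → ℝ) : ℝ :=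
  sSup {v : ℝ | ∃ M E N, IsRelaxedPolicy R tbar t D N0 M E N ∧
    v = policyObj R tbar t M}

/-- The full-matching value `V_t(N0; D)`. -/
noncomputable def fullValue (R : Type*) [Fintype R] (tbar t : ℕ)
    (D : ℕ → R → R → ℝ) (N0 : R → ℝ) : ℝ :=
  sSup {v : ℝ | ∃ M E N, IsFullMatchingPolicy R tbar t D N0 M E N ∧
    v = policyObj R tbar t M}

/-!
Moving `δ` vehicles costs at most `δ` completed requests: withdraw the vehicles that are missing
and let the extra ones relocate to where the withdrawn ones would have gone, so that only the
current interval is affected. On the other hand, turning `δ` units of relocation into matches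
gains `δ` requests at once and moves at most `δ` vehicles of the next distribution. Hence matching
greedily in one interval after another never loses: the vehicles misplaced relative to the given
relaxed policy are always paid for by requests already gained.
-/

section Finite

variable {ι κ 𝕜 : Type*} [Fintype ι] [Fintype κ] [Field 𝕜] [LinearOrder 𝕜] [IsStrictOrderedRing 𝕜]

lemma exists_mem_Icc_sum_eq {a b : ι → 𝕜} (hab : a ≤ b) {s : 𝕜}
    (hs : s ∈ Set.Icc (∑ i, a i) (∑ i, b i)) : ∃ c ∈ Set.Icc a b, ∑ i, c i = s := by
  set θ : 𝕜 := (s - ∑ i, a i) / (∑ i, b i - ∑ i, a i)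
  have hθ₀ : 0 ≤ θ := div_nonneg (sub_nonneg.2 hs.1) (sub_nonneg.2 (hs.1.trans hs.2))
  have hθ₁ : θ ≤ 1 :=
    div_le_one_of_le₀ (sub_le_sub_right hs.2 _) (sub_nonneg.2 (hs.1.trans hs.2))
  have hθ : θ * (∑ i, b i - ∑ i, a i) = s - ∑ i, a i :=
    div_mul_cancel_of_imp fun h => by linarith [hs.1, hs.2]
  refine ⟨fun i => a i + θ * (b i - a i), ⟨fun i => ?_, fun i => ?_⟩, ?_⟩
  · exact le_add_of_nonneg_right (mul_nonneg hθ₀ (sub_nonneg.2 (hab i)))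
  · linarith [mul_le_of_le_one_left (sub_nonneg.2 (hab i)) hθ₁]
  · rw [sum_add_distrib, ← mul_sum, sum_sub_distrib, hθ, add_sub_cancel]

lemma exists_nonneg_matrix_of_sum_eq {a : ι → 𝕜} {b : κ → 𝕜} (ha : 0 ≤ a) (hb : 0 ≤ b)
    (hab : ∑ i, a i = ∑ j, b j) :
    ∃ T : ι → κ → 𝕜, 0 ≤ T ∧ (∀ i, ∑ j, T i j = a i) ∧ ∀ j, ∑ i, T i j = b j := by
  refine ⟨fun i j => a i * b j / ∑ k, b k, fun i j => ?_, fun i => ?_, fun j => ?_⟩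
  · exact div_nonneg (mul_nonneg (ha i) (hb j)) (sum_nonneg fun k _ => hb k)
  · rw [← sum_div, ← mul_sum]
    refine mul_div_cancel_of_imp fun h => ?_
    exact (sum_eq_zero_iff_of_nonneg fun k _ => ha k).1 (hab.trans h) i (mem_univ i)
  · rw [← sum_div, ← sum_mul, hab, mul_comm]
    refine mul_div_cancel_of_imp fun h => ?_
    exact (sum_eq_zero_iff_of_nonneg fun k _ => hb k).1 h j (mem_univ j)

end Finite

section Interval

variable {R : Type*} [Fintype R] {D M E M' E' : R → R → ℝ} {N N' K : R → ℝ}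

/-- The constraints of a relaxed policy within one interval: `M` and `E` are the matched and
relocation flows, `D` the demand and `N` the vehicles available at each node. -/
structure IsIntervalFlow (D : R → R → ℝ) (N : R → ℝ) (M E : R → R → ℝ) : Prop where
  matched_nonneg : ∀ i j, 0 ≤ M i j
  relocated_nonneg : ∀ i j, 0 ≤ E i j
  matched_le : ∀ i j, M i j ≤ D i j
  departures_eq : ∀ i, ∑ j, (M i j + E i j) = N i

/-- An interval flow in which each node matches as much as its vehicles and demand allow: the
constraints of a full-matching policy within one interval. -/
structure IsFullMatchingFlow (D : R → R → ℝ) (N : R → ℝ) (M E : R → R → ℝ) : Prop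
    extends IsIntervalFlow D N M E where
  matched_eq : ∀ i, ∑ j, M i j = min (N i) (∑ j, D i j)

/-- The vehicle distribution produced by matched flow `M` and relocation flow `E`. -/
def arrivals (M E : R → R → ℝ) (j : R) : ℝ := ∑ i, (M i j + E i j)

/-- The number of vehicles by which `N'` falls short of `N`, summed over the nodes; for
distributions of equal total mass, the number of vehicles to move to turn one into the other. -/
noncomputable def shortage (N N' : R → ℝ) : ℝ := ∑ i, (N i - N' i)⁺

lemma shortage_nonneg (N N' : R → ℝ) : 0 ≤ shortage N N' :=
  sum_nonneg fun _ _ => posPart_nonneg _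

lemma shortage_self (N : R → ℝ) : shortage N N = 0 := by
  simp [shortage]

lemma shortage_eq_sum_sub_min (N N' : R → ℝ) :
    shortage N N' = ∑ i, (N i - min (N i) (N' i)) :=
  sum_congr rfl fun i _ => by rw [posPart_def, ← max_sub_sub_left, sub_self, max_comm]

namespace IsIntervalFlow

lemma nonneg (h : IsIntervalFlow D N M E) (i : R) : 0 ≤ N i :=
  h.departures_eq i ▸
    sum_nonneg fun j _ => add_nonneg (h.matched_nonneg i j) (h.relocated_nonneg i j)

lemma arrivals_nonneg (h : IsIntervalFlow D N M E) (j : R) : 0 ≤ arrivals M E j :=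
  sum_nonneg fun i _ => add_nonneg (h.matched_nonneg i j) (h.relocated_nonneg i j)

lemma sum_arrivals (h : IsIntervalFlow D N M E) : ∑ j, arrivals M E j = ∑ i, N i :=
  sum_comm.trans (sum_congr rfl fun i _ => h.departures_eq i)

lemma exists_thinning (h : IsIntervalFlow D N M E) (hK : 0 ≤ K) (hKN : K ≤ N) :
    ∃ M' E', IsIntervalFlow D K M' E' ∧ M' ≤ M ∧ E' ≤ E := by
  set l : R → ℝ := fun i => K i / N i
  have hl₀ (i) : 0 ≤ l i := div_nonneg (hK i) (h.nonneg i)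
  have hl₁ (i) : l i ≤ 1 := div_le_one_of_le₀ (hKN i) (h.nonneg i)
  have hl (i) : l i * N i = K i :=
    div_mul_cancel_of_imp fun hN => le_antisymm (hN ▸ hKN i) (hK i)
  have hM : ∀ i j, l i * M i j ≤ M i j := fun i j =>
    mul_le_of_le_one_left (h.matched_nonneg i j) (hl₁ i)
  refine ⟨fun i j => l i * M i j, fun i j => l i * E i j, ⟨fun i j => ?_, fun i j => ?_,
    fun i j => (hM i j).trans (h.matched_le i j), fun i => ?_⟩, hM, fun i j => ?_⟩
  · exact mul_nonneg (hl₀ i) (h.matched_nonneg i j)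
  · exact mul_nonneg (hl₀ i) (h.relocated_nonneg i j)
  · simp only [← mul_add, ← mul_sum, h.departures_eq, hl]
  · exact mul_le_of_le_one_left (h.relocated_nonneg i j) (hl₁ i)

lemma sum_matched_sub_le (h : IsIntervalFlow D N M E) (h' : IsIntervalFlow D K M' E')
    (hE : E' ≤ E) : ∑ i, ∑ j, M i j - ∑ i, ∑ j, M' i j ≤ ∑ i, (N i - K i) := by
  simp only [← sum_sub_distrib, ← h.departures_eq, ← h'.departures_eq]
  exact sum_le_sum fun i _ => sum_le_sum fun j _ => by linarith [hE i j]

lemma exists_resupply (h : IsIntervalFlow D N M E) (hN' : 0 ≤ N')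
    (hsum : ∑ i, N' i = ∑ i, N i) :
    ∃ M' E', IsIntervalFlow D N' M' E' ∧ arrivals M' E' = arrivals M E ∧
      ∑ i, ∑ j, M i j ≤ ∑ i, ∑ j, M' i j + shortage N N' := by
  set K : R → ℝ := fun i => min (N i) (N' i)
  obtain ⟨M', E', hK, hM', hE'⟩ :=
    h.exists_thinning (K := K) (fun i => le_min (h.nonneg i) (hN' i)) fun i => min_le_left _ _
  -- Extra vehicles replace the withdrawn ones by relocating to wherever arrivals are missing.
  obtain ⟨T, hT, hTrow, hTcol⟩ := exists_nonneg_matrix_of_sum_eq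
    (a := fun i => N' i - K i) (b := fun j => arrivals M E j - arrivals M' E' j)
    (fun i => sub_nonneg.2 (min_le_right _ _))
    (fun j => sub_nonneg.2 (sum_le_sum fun i _ => add_le_add (hM' i j) (hE' i j)))
    (by rw [sum_sub_distrib, sum_sub_distrib, h.sum_arrivals, hK.sum_arrivals, hsum])
  refine ⟨M', E' + T, ⟨hK.matched_nonneg, fun i j => ?_, hK.matched_le, fun i => ?_⟩, ?_, ?_⟩
  · exact add_nonneg (hK.relocated_nonneg i j) (hT i j)
  · simp only [Pi.add_apply, ← add_assoc]
    rw [sum_add_distrib, hK.departures_eq, hTrow, add_sub_cancel]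
  · ext j
    simp only [arrivals, Pi.add_apply, ← add_assoc]
    rw [sum_add_distrib, hTcol]
    exact add_sub_cancel _ _
  · rw [shortage_eq_sum_sub_min]
    linarith [h.sum_matched_sub_le hK hE']

lemma exists_completion (h : IsIntervalFlow D N M E) :
    ∃ M' E', IsFullMatchingFlow D N M' E' ∧ M ≤ M' ∧ E' ≤ E := by
  have hMN (i) : N i = ∑ j, M i j + ∑ j, E i j := by rw [← h.departures_eq, sum_add_distrib]
  have hmatch (i) : ∑ j, M i j ≤ min (N i) (∑ j, D i j) :=
    le_min (by linarith [hMN i, sum_nonneg fun j (_ : j ∈ univ) => h.relocated_nonneg i j])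
      (sum_le_sum fun j _ => h.matched_le i j)
  choose M' hM' hM'sum using fun i =>
    exists_mem_Icc_sum_eq (h.matched_le i) ⟨hmatch i, min_le_right _ _⟩
  choose E' hE' hE'sum using fun i =>
    exists_mem_Icc_sum_eq (a := 0) (h.relocated_nonneg i) (s := N i - min (N i) (∑ j, D i j))
      ⟨by simp, by linarith [hMN i, hmatch i]⟩
  refine ⟨M', E', ⟨⟨fun i j => ?_, fun i => (hE' i).1, fun i => (hM' i).2, fun i => ?_⟩,
    hM'sum⟩, fun i => (hM' i).1, fun i => (hE' i).2⟩
  · exact (h.matched_nonneg i j).trans ((hM' i).1 j)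
  · rw [sum_add_distrib, hM'sum, hE'sum, add_sub_cancel]

lemma sum_matched_add_shortage_le (h : IsIntervalFlow D N M E) (h' : IsIntervalFlow D N M' E')
    (hM : M ≤ M') (hE : E' ≤ E) :
    ∑ i, ∑ j, M i j + shortage (arrivals M E) (arrivals M' E') ≤ ∑ i, ∑ j, M' i j := by
  have hshort : shortage (arrivals M E) (arrivals M' E') ≤ ∑ j, ∑ i, (E i j - E' i j) := by
    refine sum_le_sum fun j _ => sup_le ?_ ?_
    · rw [arrivals, arrivals, ← sum_sub_distrib]
      exact sum_le_sum fun i _ => by linarith [hM i j]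
    · exact sum_nonneg fun i _ => sub_nonneg.2 (hE i j)
  have hswap : ∑ j, ∑ i, (E i j - E' i j) = ∑ i, ∑ j, M' i j - ∑ i, ∑ j, M i j := by
    rw [sum_comm, ← sum_sub_distrib]
    refine sum_congr rfl fun i _ => ?_
    have hrow := (h.departures_eq i).trans (h'.departures_eq i).symm
    rw [sum_add_distrib, sum_add_distrib] at hrow
    rw [sum_sub_distrib]
    linarith
  linarith

lemma exists_isFullMatchingFlow (h : IsIntervalFlow D N M E) (hN' : 0 ≤ N')
    (hsum : ∑ i, N' i = ∑ i, N i) :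
    ∃ M' E', IsFullMatchingFlow D N' M' E' ∧
      ∑ i, ∑ j, M i j + shortage (arrivals M E) (arrivals M' E') ≤
        ∑ i, ∑ j, M' i j + shortage N N' := by
  obtain ⟨M₁, E₁, h₁, harr, hobj⟩ := h.exists_resupply hN' hsum
  obtain ⟨M', E', h', hM, hE⟩ := h₁.exists_completion
  have hgain := h₁.sum_matched_add_shortage_le h'.toIsIntervalFlow hM hE
  exact ⟨M', E', h', by rw [← harr]; linarith⟩

end IsIntervalFlow

end Interval

section Policy

variable {R : Type*} [Fintype R] {tbar t : ℕ} {D : ℕ → R → R → ℝ} {N0 N0' : R → ℝ}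
  {M E : ℕ → R → R → ℝ} {N : ℕ → R → ℝ}

lemma policyObj_of_lt (ht : tbar < t) (M : ℕ → R → R → ℝ) : policyObj R tbar t M = 0 := by
  simp [policyObj, ht]

lemma policyObj_eq_add (ht : t ≤ tbar) (M : ℕ → R → R → ℝ) :
    policyObj R tbar t M = ∑ i, ∑ j, M t i j + policyObj R tbar (t + 1) M := by
  rw [policyObj, ← insert_Icc_add_one_left_eq_Icc ht, sum_insert (by simp), policyObj]

lemma policyObj_update (ht : t ≤ tbar) (M : ℕ → R → R → ℝ) (m : R → R → ℝ) :
    policyObj R tbar t (Function.update M t m) =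
      ∑ i, ∑ j, m i j + policyObj R tbar (t + 1) M := by
  rw [policyObj_eq_add ht, Function.update_self]
  congr 1
  refine sum_congr rfl fun s hs => ?_
  rw [Function.update_of_ne (Nat.ne_of_gt (mem_Icc.1 hs).1)]

namespace IsRelaxedPolicy

lemma isIntervalFlow (h : IsRelaxedPolicy R tbar t D N0 M E N) (ht : t ≤ tbar) :
    IsIntervalFlow (D t) N0 (M t) (E t) := by
  obtain ⟨hinit, -, hM, hE, hMD, hdep⟩ := h
  have htmem : t ∈ Icc t tbar := left_mem_Icc.2 ht
  exact ⟨hM t htmem, hE t htmem, hMD t htmem, fun i => (hdep t htmem i).trans (hinit i)⟩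

lemma tail (h : IsRelaxedPolicy R tbar t D N0 M E N) (ht : t ≤ tbar) :
    IsRelaxedPolicy R tbar (t + 1) D (arrivals (M t) (E t)) M E N := by
  obtain ⟨-, hnext, hM, hE, hMD, hdep⟩ := h
  have hmem : ∀ s ∈ Icc (t + 1) tbar, s ∈ Icc t tbar := Icc_subset_Icc_left t.le_succ
  exact ⟨hnext t (left_mem_Icc.2 ht), fun s hs => hnext s (hmem s hs),
    fun s hs => hM s (hmem s hs), fun s hs => hE s (hmem s hs),
    fun s hs => hMD s (hmem s hs), fun s hs => hdep s (hmem s hs)⟩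

end IsRelaxedPolicy

lemma isFullMatchingPolicy_of_lt (ht : tbar < t) (D : ℕ → R → R → ℝ) (N0 : R → ℝ)
    (M E : ℕ → R → R → ℝ) : IsFullMatchingPolicy R tbar t D N0 M E fun _ => N0 := by
  simp [IsFullMatchingPolicy, IsRelaxedPolicy, ht]

lemma IsFullMatchingPolicy.cons {m e : R → R → ℝ}
    (h : IsFullMatchingPolicy R tbar (t + 1) D (arrivals m e) M E N)
    (hflow : IsFullMatchingFlow (D t) N0 m e) :
    IsFullMatchingPolicy R tbar t D N0 (Function.update M t m) (Function.update E t e)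
      (Function.update N t N0) := by
  obtain ⟨⟨hinit, hnext, hM, hE, hMD, hdep⟩, hfull⟩ := h
  have head_tail {P : ℕ → Prop} (hhead : P t) (htail : ∀ s ∈ Icc (t + 1) tbar, s ≠ t → P s) :
      ∀ s ∈ Icc t tbar, P s := fun s hs => by
    obtain rfl | hts := (mem_Icc.1 hs).1.eq_or_lt
    · exact hhead
    · exact htail s (mem_Icc.2 ⟨hts, (mem_Icc.1 hs).2⟩) hts.ne'
  refine ⟨⟨by simp, head_tail ?_ fun s hs hst => ?_, ?_, ?_, ?_, ?_⟩, ?_⟩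
  · simpa [arrivals] using hinit
  · have hst' : s + 1 ≠ t := by grind
    simpa [hst, hst'] using hnext s hs
  · exact head_tail (by simpa using hflow.matched_nonneg)
      fun s hs hst => by simpa [hst] using hM s hs
  · exact head_tail (by simpa using hflow.relocated_nonneg)
      fun s hs hst => by simpa [hst] using hE s hs
  · exact head_tail (by simpa using hflow.matched_le)
      fun s hs hst => by simpa [hst] using hMD s hs
  · exact head_tail (by simpa using hflow.departures_eq)
      fun s hs hst => by simpa [hst] using hdep s hs
  · exact head_tail (by simpa using hflow.matched_eq)
      fun s hs hst => by simpa [hst] using hfull s hs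

theorem IsRelaxedPolicy.exists_isFullMatchingPolicy_of_sum_eq
    (h : IsRelaxedPolicy R tbar t D N0 M E N) (hN0' : 0 ≤ N0')
    (hsum : ∑ i, N0' i = ∑ i, N0 i) :
    ∃ M' E' N', IsFullMatchingPolicy R tbar t D N0' M' E' N' ∧
      policyObj R tbar t M ≤ policyObj R tbar t M' + shortage N0 N0' := by
  induction hn : tbar + 1 - t generalizing t N0 N0' with
  | zero =>
    have ht : tbar < t := by lia
    refine ⟨M, E, _, isFullMatchingPolicy_of_lt ht D N0' M E, ?_⟩
    exact le_add_of_nonneg_right (shortage_nonneg N0 N0')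
  | succ n ih =>
    have ht : t ≤ tbar := by lia
    have hhead := h.isIntervalFlow ht
    obtain ⟨m, e, hflow, hstep⟩ := hhead.exists_isFullMatchingFlow hN0' hsum
    obtain ⟨M', E', N', htail, hobj⟩ := ih (h.tail ht) hflow.arrivals_nonneg
      (by rw [hflow.sum_arrivals, hhead.sum_arrivals, hsum]) (by lia)
    refine ⟨_, _, _, htail.cons hflow, ?_⟩
    rw [policyObj_eq_add ht, policyObj_update ht]
    linarith

theorem IsRelaxedPolicy.exists_isFullMatchingPolicy
    (h : IsRelaxedPolicy R tbar t D N0 M E N) (hN0 : 0 ≤ N0) :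
    ∃ M' E' N', IsFullMatchingPolicy R tbar t D N0 M' E' N' ∧
      policyObj R tbar t M ≤ policyObj R tbar t M' := by
  simpa only [shortage_self, add_zero] using h.exists_isFullMatchingPolicy_of_sum_eq hN0 rfl

end Policy

/-- **Proposition 1** (zero Lagrangian duality gap of SLM in the stylized
case): imposing the full-matching requirement does not reduce the maximum
achievable number of completed requests. -/
theorem fullValue_eq_relaxedValue (R : Type*) [Fintype R] [Nonempty R]
    (tbar t : ℕ) (ht : t ∈ Finset.Icc 1 tbar)
    (D : ℕ → R → R → ℝ) (hD : ∀ s i j, 0 ≤ D s i j)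
    (N0 : R → ℝ) (hN0 : ∀ i, 0 ≤ N0 i) :
    fullValue R tbar t D N0 = relaxedValue R tbar t D N0 := by
  apply csSup_eq_csSup_of_forall_exists_le
  · rintro _ ⟨M, E, N, h, rfl⟩
    exact ⟨_, ⟨M, E, N, h.1, rfl⟩, le_rfl⟩
  · rintro _ ⟨M, E, N, h, rfl⟩
    obtain ⟨M', E', N', h', hle⟩ := h.exists_isFullMatchingPolicy hN0
    exact ⟨_, ⟨M', E', N', h', rfl⟩, hle⟩
end

section
/- (Lemma B.1.) In the stylized fleet model, the relaxed value is 1/2-Lipschitz in the initial distribution with respect to the ℓ¹ norm, among distributions with equal total fleet size: for every horizon t̄, interval t ∈ {1,…,t̄}, demand profile D, and initial distributions N, Ñ : R → ℝ≥0 with ∑_{i∈R} N(i) = ∑_{i∈R} Ñ(i), one has |V̂_t(N; D) − V̂_t(Ñ; D)| ≤ (1/2) ∑_{i∈R} |N(i) − Ñ(i)|. -/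
/-! Stylized fleet model of "Online Relocating and Matching of Ride-Hailing
Services: A Model-Based Modular Approach". -/

open Finset

/-!
Follow a policy from `N0` and correct it in its first interval only. Of the vehicles at node `i`,
the common part `N0 i ⊓ N0' i` keeps the same matched and relocation flows in proportion; the
surplus vehicles of `N0'` are relocated, empty, to wherever the missing vehicles of `N0` went. From
the next interval on the two fleets coincide, so only the matches of the missing vehicles are lost,
and there are `½ ∑ i, |N0 i - N0' i|` of these.
-/

/-- `w` is a transport plan from `a` to `b`: a nonnegative flow that takes `a i` out of each source
`i` and brings `b j` into each target `j`. One interval of a relaxed policy is such a flow, split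
into a matched and a relocated part. -/
structure IsTransportPlan {ι κ α : Type*} [Fintype ι] [Fintype κ] [AddCommMonoid α] [LE α]
    (a : ι → α) (b : κ → α) (w : ι → κ → α) : Prop where
  nonneg : 0 ≤ w
  sum_row : ∀ i, ∑ j, w i j = a i
  sum_col : ∀ j, ∑ i, w i j = b j

namespace IsTransportPlan

variable {ι κ α : Type*} [Fintype ι] [Fintype κ] {a a' : ι → α} {b b' : κ → α} {w w' : ι → κ → α}

theorem sum_eq_sum [AddCommMonoid α] [LE α] (h : IsTransportPlan a b w) :
    ∑ i, a i = ∑ j, b j := by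
  simp only [← h.sum_row, ← h.sum_col]
  exact Finset.sum_comm

theorem source_nonneg [AddCommMonoid α] [Preorder α] [AddLeftMono α]
    (h : IsTransportPlan a b w) : 0 ≤ a := fun i =>
  (Finset.sum_nonneg fun j _ => h.nonneg i j).trans_eq (h.sum_row i)

theorem target_nonneg [AddCommMonoid α] [Preorder α] [AddLeftMono α]
    (h : IsTransportPlan a b w) : 0 ≤ b := fun j =>
  (Finset.sum_nonneg fun i _ => h.nonneg i j).trans_eq (h.sum_col j)

theorem add [AddCommMonoid α] [Preorder α] [AddLeftMono α]
    (h : IsTransportPlan a b w) (h' : IsTransportPlan a' b' w') :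
    IsTransportPlan (a + a') (b + b') (w + w') where
  nonneg i j := add_nonneg (h.nonneg i j) (h'.nonneg i j)
  sum_row i := by simp only [Pi.add_apply, Finset.sum_add_distrib, h.sum_row, h'.sum_row]
  sum_col j := by simp only [Pi.add_apply, Finset.sum_add_distrib, h.sum_col, h'.sum_col]

theorem scale_rows [Semiring α] [Preorder α] [PosMulMono α] {r : ι → α} (hr : 0 ≤ r)
    (h : IsTransportPlan a b w) :
    IsTransportPlan (r * a) (fun j => ∑ i, r i * w i j) (fun i j => r i * w i j) where
  nonneg i j := mul_nonneg (hr i) (h.nonneg i j)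
  sum_row i := by rw [← Finset.mul_sum, h.sum_row, Pi.mul_apply]
  sum_col _ := rfl

end IsTransportPlan

section OrderedField

variable {ι κ 𝕜 : Type*} [Field 𝕜] [LinearOrder 𝕜] [IsStrictOrderedRing 𝕜]

theorem exists_mul_eq_of_le {x y : 𝕜} (hy : 0 ≤ y) (hyx : y ≤ x) :
    ∃ r, 0 ≤ r ∧ r ≤ 1 ∧ r * x = y :=
  ⟨y / x, div_nonneg hy (hy.trans hyx), div_le_one_of_le₀ hyx (hy.trans hyx),
    div_mul_cancel_of_imp fun hx => le_antisymm (hyx.trans_eq hx) hy⟩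

theorem sum_sub_inf_eq_half_sum_abs_sub {s : Finset ι} {a a' : ι → 𝕜}
    (h : ∑ i ∈ s, a i = ∑ i ∈ s, a' i) :
    ∑ i ∈ s, (a i - a i ⊓ a' i) = 1 / 2 * ∑ i ∈ s, |a i - a' i| := by
  have sub_inf (i : ι) : a i - a i ⊓ a' i = 1 / 2 * (a i - a' i) + 1 / 2 * |a i - a' i| := by
    have two_inf := two_nsmul_inf_eq_add_sub_abs_sub (a i) (a' i)
    rw [two_nsmul, abs_sub_comm] at two_inf
    linarith
  rw [Finset.sum_congr rfl fun i _ => sub_inf i, Finset.sum_add_distrib, ← Finset.mul_sum,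
    ← Finset.mul_sum, Finset.sum_sub_distrib, h, sub_self, mul_zero, zero_add]

variable [Fintype ι] [Fintype κ]

theorem exists_isTransportPlan {a : ι → 𝕜} {b : κ → 𝕜} (ha : 0 ≤ a) (hb : 0 ≤ b)
    (hab : ∑ i, a i = ∑ j, b j) : ∃ w, IsTransportPlan a b w := by
  have eq_zero_of_sum {i} (h : ∑ j, b j = 0) : a i = 0 :=
    (Finset.sum_eq_zero_iff_of_nonneg fun i _ => ha i).1 (hab.trans h) i (Finset.mem_univ i)
  have eq_zero_of_sum' {j} (h : ∑ j, b j = 0) : b j = 0 :=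
    (Finset.sum_eq_zero_iff_of_nonneg fun j _ => hb j).1 h j (Finset.mem_univ j)
  refine ⟨fun i j => a i * b j / ∑ j, b j, fun i j => ?_, fun i => ?_, fun j => ?_⟩
  · exact div_nonneg (mul_nonneg (ha i) (hb j)) (Finset.sum_nonneg fun j _ => hb j)
  · rw [← Finset.sum_div, ← Finset.mul_sum, mul_div_cancel_of_imp eq_zero_of_sum]
  · rw [← Finset.sum_div, ← Finset.sum_mul, hab, mul_div_cancel_left_of_imp eq_zero_of_sum']

theorem IsTransportPlan.exists_reroute {a a' : ι → 𝕜} {b : κ → 𝕜} {w : ι → κ → 𝕜}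
    (h : IsTransportPlan a b w) (ha' : 0 ≤ a') (haa' : ∑ i, a i = ∑ i, a' i) :
    ∃ (r : ι → 𝕜) (v : ι → κ → 𝕜), 0 ≤ r ∧ r ≤ 1 ∧ r * a = a ⊓ a' ∧ 0 ≤ v ∧
      IsTransportPlan a' b ((fun i j => r i * w i j) + v) := by
  choose r hr0 hr1 hra using fun i =>
    exists_mul_eq_of_le (le_min (h.source_nonneg i) (ha' i)) (min_le_left (a i) (a' i))
  have hra' : r * a = a ⊓ a' := funext hra
  have kept := h.scale_rows hr0
  have missing := h.scale_rows (sub_nonneg.2 (show r ≤ 1 from hr1))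
  have surplus_eq : ∑ i, (a' - a ⊓ a') i = ∑ j, ∑ i, (1 - r) i * w i j := by
    rw [← missing.sum_eq_sum, sub_mul, one_mul, hra']
    simp only [Pi.sub_apply, Finset.sum_sub_distrib, haa']
  obtain ⟨v, hv⟩ :=
    exists_isTransportPlan (sub_nonneg.2 inf_le_right) missing.target_nonneg surplus_eq
  refine ⟨r, v, hr0, hr1, hra', hv.nonneg, ?_⟩
  convert kept.add hv using 1
  · rw [hra', add_sub_cancel]
  · funext j
    simp only [Pi.add_apply, Pi.sub_apply, Pi.one_apply, ← Finset.sum_add_distrib, ← add_mul,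
      add_sub_cancel, one_mul, h.sum_col]

theorem IsTransportPlan.exists_reroute_split {a a' : ι → 𝕜} {b : κ → 𝕜} {M E : ι → κ → 𝕜}
    (h : IsTransportPlan a b (M + E)) (hM : 0 ≤ M) (hE : 0 ≤ E) (ha' : 0 ≤ a')
    (haa' : ∑ i, a i = ∑ i, a' i) :
    ∃ M' E', 0 ≤ M' ∧ 0 ≤ E' ∧ M' ≤ M ∧ IsTransportPlan a' b (M' + E') ∧
      ∑ i, ∑ j, M i j ≤ ∑ i, ∑ j, M' i j + 1 / 2 * ∑ i, |a i - a' i| := by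
  obtain ⟨r, v, hr0, hr1, hra, hv, hplan⟩ := h.exists_reroute ha' haa'
  refine ⟨fun i j => r i * M i j, (fun i j => r i * E i j) + v,
    fun i j => mul_nonneg (hr0 i) (hM i j),
    add_nonneg (fun i j => mul_nonneg (hr0 i) (hE i j)) hv,
    fun i j => mul_le_of_le_one_left (hM i j) (hr1 i), ?_, ?_⟩
  · convert hplan using 1
    ext i j
    simp only [Pi.add_apply]
    ring
  · have row_le (i : ι) : ∑ j, M i j ≤ a i := by
      rw [← h.sum_row i]
      exact Finset.sum_le_sum fun j _ => le_add_of_nonneg_right (hE i j)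
    rw [← sum_sub_inf_eq_half_sum_abs_sub haa', ← Finset.sum_add_distrib]
    refine Finset.sum_le_sum fun i _ => ?_
    have lost_le : (1 - r i) * ∑ j, M i j ≤ a i - a i ⊓ a' i := calc
      (1 - r i) * ∑ j, M i j ≤ (1 - r i) * a i :=
        mul_le_mul_of_nonneg_left (row_le i) (sub_nonneg.2 (hr1 i))
      _ = a i - a i ⊓ a' i := by rw [sub_mul, one_mul]; exact congrArg _ (congrFun hra i)
    rw [← Finset.mul_sum]
    linarith

end OrderedField

section Policy

variable {R : Type*} [Fintype R] {tbar t : ℕ} {D M E : ℕ → R → R → ℝ} {N0 N0' : R → ℝ}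
  {N : ℕ → R → ℝ}

theorem isRelaxedPolicy_iff :
    IsRelaxedPolicy R tbar t D N0 M E N ↔
      N t = N0 ∧ ∀ s ∈ Finset.Icc t tbar, 0 ≤ M s ∧ 0 ≤ E s ∧ M s ≤ D s ∧
        IsTransportPlan (N s) (N (s + 1)) (M s + E s) := by
  constructor
  · rintro ⟨hinit, hnext, hM, hE, hMD, hout⟩
    exact ⟨funext hinit, fun s hs => ⟨hM s hs, hE s hs, hMD s hs,
      add_nonneg (hM s hs) (hE s hs), hout s hs, fun j => (hnext s hs j).symm⟩⟩
  · rintro ⟨hinit, hstep⟩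
    exact ⟨congrFun hinit, fun s hs j => ((hstep s hs).2.2.2.sum_col j).symm,
      fun s hs => (hstep s hs).1, fun s hs => (hstep s hs).2.1, fun s hs => (hstep s hs).2.2.1,
      fun s hs => (hstep s hs).2.2.2.sum_row⟩

theorem exists_isRelaxedPolicy (hD : ∀ s i j, 0 ≤ D s i j) (hN0 : ∀ i, 0 ≤ N0 i) :
    ∃ M E N, IsRelaxedPolicy R tbar t D N0 M E N := by
  obtain ⟨w, hw⟩ := exists_isTransportPlan (a := N0) (b := N0) hN0 hN0 rfl
  refine ⟨0, fun _ => w, fun _ => N0, isRelaxedPolicy_iff.2 ⟨rfl, fun s _ => ?_⟩⟩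
  exact ⟨le_rfl, hw.nonneg, hD s, by simpa only [Pi.zero_apply, zero_add] using hw⟩

theorem IsRelaxedPolicy.update_start (h : IsRelaxedPolicy R tbar t D N0 M E N)
    {M₀ E₀ : R → R → ℝ} (hM₀ : 0 ≤ M₀) (hE₀ : 0 ≤ E₀) (hMD : M₀ ≤ D t)
    (hplan : IsTransportPlan N0' (N (t + 1)) (M₀ + E₀)) :
    IsRelaxedPolicy R tbar t D N0' (Function.update M t M₀) (Function.update E t E₀)
      (Function.update N t N0') := by
  refine isRelaxedPolicy_iff.2 ⟨Function.update_self .., fun s hs => ?_⟩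
  have hne : s + 1 ≠ t := (Nat.lt_succ_of_le (Finset.mem_Icc.1 hs).1).ne'
  rw [Function.update_of_ne hne]
  obtain rfl | hst := eq_or_ne s t
  · simpa only [Function.update_self] using ⟨hM₀, hE₀, hMD, hplan⟩
  · simpa only [Function.update_of_ne hst] using (isRelaxedPolicy_iff.1 h).2 s hs

theorem policyObj_eq_add_sum_Ioc (ht : t ≤ tbar) (M : ℕ → R → R → ℝ) :
    policyObj R tbar t M =
      ∑ i, ∑ j, M t i j + ∑ s ∈ Finset.Ioc t tbar, ∑ i, ∑ j, M s i j := by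
  rw [policyObj, Finset.Icc_eq_cons_Ioc ht, Finset.sum_cons]

theorem policyObj_update_start (ht : t ≤ tbar) (M : ℕ → R → R → ℝ) (M₀ : R → R → ℝ) :
    policyObj R tbar t (Function.update M t M₀) =
      policyObj R tbar t M - ∑ i, ∑ j, M t i j + ∑ i, ∑ j, M₀ i j := by
  have later : ∑ s ∈ Finset.Ioc t tbar, ∑ i, ∑ j, Function.update M t M₀ s i j =
      ∑ s ∈ Finset.Ioc t tbar, ∑ i, ∑ j, M s i j :=
    Finset.sum_congr rfl fun s hs => by
      rw [Function.update_of_ne (Finset.mem_Ioc.1 hs).1.ne']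
  rw [policyObj_eq_add_sum_Ioc ht, policyObj_eq_add_sum_Ioc ht, later, Function.update_self]
  ring

theorem IsRelaxedPolicy.policyObj_le (h : IsRelaxedPolicy R tbar t D N0 M E N) :
    policyObj R tbar t M ≤ policyObj R tbar t D :=
  Finset.sum_le_sum fun s hs => Finset.sum_le_sum fun i _ => Finset.sum_le_sum fun j _ =>
    ((isRelaxedPolicy_iff.1 h).2 s hs).2.2.1 i j

theorem IsRelaxedPolicy.policyObj_le_relaxedValue (h : IsRelaxedPolicy R tbar t D N0 M E N) :
    policyObj R tbar t M ≤ relaxedValue R tbar t D N0 := by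
  refine le_csSup ⟨policyObj R tbar t D, ?_⟩ ⟨M, E, N, h, rfl⟩
  rintro _ ⟨M', E', N', h', rfl⟩
  exact h'.policyObj_le

theorem relaxedValue_le {c : ℝ} (hD : ∀ s i j, 0 ≤ D s i j) (hN0 : ∀ i, 0 ≤ N0 i)
    (hc : ∀ M E N, IsRelaxedPolicy R tbar t D N0 M E N → policyObj R tbar t M ≤ c) :
    relaxedValue R tbar t D N0 ≤ c := by
  obtain ⟨M, E, N, h⟩ := exists_isRelaxedPolicy hD hN0
  refine csSup_le ⟨_, M, E, N, h, rfl⟩ ?_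
  rintro _ ⟨M', E', N', h', rfl⟩
  exact hc M' E' N' h'

theorem IsRelaxedPolicy.exists_policyObj_le_add (h : IsRelaxedPolicy R tbar t D N0 M E N)
    (ht : t ≤ tbar) (hN0' : ∀ i, 0 ≤ N0' i) (htot : ∑ i, N0 i = ∑ i, N0' i) :
    ∃ M' E' N', IsRelaxedPolicy R tbar t D N0' M' E' N' ∧
      policyObj R tbar t M ≤ policyObj R tbar t M' + 1 / 2 * ∑ i, |N0 i - N0' i| := by
  obtain ⟨rfl, hstep⟩ := isRelaxedPolicy_iff.1 h
  obtain ⟨hM, hE, hMD, hplan⟩ := hstep t (Finset.left_mem_Icc.2 ht)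
  obtain ⟨M₀, E₀, hM₀, hE₀, hM₀M, hplan₀, hloss⟩ := hplan.exists_reroute_split hM hE hN0' htot
  refine ⟨_, _, _, h.update_start hM₀ hE₀ (hM₀M.trans hMD) hplan₀, ?_⟩
  rw [policyObj_update_start ht]
  linarith

theorem relaxedValue_le_add (ht : t ≤ tbar) (hD : ∀ s i j, 0 ≤ D s i j) (hN0 : ∀ i, 0 ≤ N0 i)
    (hN0' : ∀ i, 0 ≤ N0' i) (htot : ∑ i, N0 i = ∑ i, N0' i) :
    relaxedValue R tbar t D N0 ≤
      relaxedValue R tbar t D N0' + 1 / 2 * ∑ i, |N0 i - N0' i| := by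
  refine relaxedValue_le hD hN0 fun M E N h => ?_
  obtain ⟨M', E', N', h', hle⟩ := h.exists_policyObj_le_add ht hN0' htot
  exact hle.trans (by gcongr; exact h'.policyObj_le_relaxedValue)

end Policy

/-- **Lemma B.1**: the relaxed value is `1/2`-Lipschitz in the initial
distribution with respect to the `ℓ¹` norm, among nonnegative initial
distributions with equal total fleet size. -/
theorem relaxedValue_lipschitz (R : Type*) [Fintype R] [Nonempty R]
    (tbar t : ℕ) (ht : t ∈ Finset.Icc 1 tbar)
    (D : ℕ → R → R → ℝ) (hD : ∀ s i j, 0 ≤ D s i j)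
    (N0 N0' : R → ℝ) (hN0 : ∀ i, 0 ≤ N0 i) (hN0' : ∀ i, 0 ≤ N0' i)
    (htot : ∑ i, N0 i = ∑ i, N0' i) :
    |relaxedValue R tbar t D N0 - relaxedValue R tbar t D N0'| ≤
      (1 / 2) * ∑ i, |N0 i - N0' i| := by
  have ht' : t ≤ tbar := (Finset.mem_Icc.1 ht).2
  rw [abs_sub_le_iff, sub_le_iff_le_add', sub_le_iff_le_add']
  refine ⟨relaxedValue_le_add ht' hD hN0 hN0' htot, ?_⟩
  simpa only [abs_sub_comm] using relaxedValue_le_add ht' hD hN0' hN0 htot.symm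
end

section
/- (Proposition 2, Case 1: optimality of the fractional-part greedy allocation.) Write x⁰_j = min(⌊q_j⌋, c_j), S = {j ∈ R : c_j > ⌊q_j⌋}, m = n − ∑_{j∈R} x⁰_j (a nonnegative integer), and θ_j = q_j − ⌊q_j⌋. Suppose |S| > m, and let T ⊆ S with |T| = m be such that θ_i ≥ θ_j for every i ∈ T and j ∈ S∖T. Then x* defined by x*_j = x⁰_j + 1 for j ∈ T and x*_j = x⁰_j otherwise is a vehicle allocation, and for every vehicle allocation x, ∑_{j∈R} max(0, q_j − x_j) ≥ ∑_{j∈R} max(0, q_j − x*_j); i.e., x* minimizes the reduced MVA objective. -/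
open Finset

/-!
Charge a price `p ∈ [0, 1]` for every vehicle. All allocations use the same number of vehicles, so
an allocation that minimizes the priced shortfall `max 0 (q j - k) + p * k` zone by zone also
minimizes the total shortfall. As a function of `k` the priced shortfall decreases up to `q j` and
increases beyond it, so its minimizer over the natural numbers is `⌊q j⌋` or `⌊q j⌋ + 1`, according
to whether the fractional part of `q j` lies below or above `p`, or is the capacity `c j` if that
does not exceed `⌊q j⌋`. The greedy allocation makes exactly these choices once `p` separates the
fractional parts of the zones that receive an extra vehicle from those of the zones that could have
received one.
-/

namespace MVA

theorem exists_mem_Icc_separating {ι α : Type*} [LinearOrder α] {a b : α} {s t : Finset ι}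
    {f : ι → α} (hab : a ≤ b) (hs : ∀ j ∈ s, f j ∈ Set.Icc a b) (ht : ∀ i ∈ t, a ≤ f i)
    (hst : ∀ i ∈ t, ∀ j ∈ s, f j ≤ f i) :
    ∃ p ∈ Set.Icc a b, (∀ j ∈ s, f j ≤ p) ∧ ∀ i ∈ t, p ≤ f i := by
  rcases s.eq_empty_or_nonempty with rfl | hne
  · exact ⟨a, Set.left_mem_Icc.2 hab, by simp, ht⟩
  · obtain ⟨k, hk, hmax⟩ := s.exists_max_image f hne
    exact ⟨f k, hs k hk, hmax, fun i hi => hst i hi k hk⟩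

section PricedShortfall

variable {K : Type*} [CommRing K] [LinearOrder K]

/-- The Lagrangian cost of sending `x` vehicles to a zone with quota `q`: the shortfall
`max 0 (q - x)` plus the price `p` of each vehicle, `p` being the multiplier of the constraint that
fixes the total number of vehicles. The argument `x` ranges over `K` rather than `ℕ` so that the
cost can be compared with its value at the turning point `q`. -/
def pricedShortfall (p q x : K) : K := max 0 (q - x) + p * x

variable [IsStrictOrderedRing K] {p q : K}

theorem pricedShortfall_of_le {x : K} (h : x ≤ q) :
    pricedShortfall p q x = q - x + p * x := by
  rw [pricedShortfall, max_eq_right (sub_nonneg.2 h)]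

theorem pricedShortfall_of_ge {x : K} (h : q ≤ x) :
    pricedShortfall p q x = p * x := by
  rw [pricedShortfall, max_eq_left (sub_nonpos.2 h), zero_add]

theorem antitoneOn_pricedShortfall (hp : p ≤ 1) :
    AntitoneOn (pricedShortfall p q) (Set.Iic q) := by
  intro x hx y hy hxy
  rw [pricedShortfall_of_le hx, pricedShortfall_of_le hy]
  linarith [mul_le_mul_of_nonneg_right hp (sub_nonneg.2 hxy)]

theorem monotoneOn_pricedShortfall (hp : 0 ≤ p) :
    MonotoneOn (pricedShortfall p q) (Set.Ici q) := by
  intro x hx y hy hxy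
  rw [pricedShortfall_of_ge hx, pricedShortfall_of_ge hy]
  exact mul_le_mul_of_nonneg_left hxy hp

theorem sum_shortfall_le_of_pricedShortfall_le {ι : Type*} {s : Finset ι} {q x y : ι → K} (p : K)
    (hsum : ∑ j ∈ s, x j = ∑ j ∈ s, y j)
    (h : ∀ j ∈ s, pricedShortfall p (q j) (x j) ≤ pricedShortfall p (q j) (y j)) :
    ∑ j ∈ s, max 0 (q j - x j) ≤ ∑ j ∈ s, max 0 (q j - y j) := by
  have priced_le := sum_le_sum h
  simp only [pricedShortfall, sum_add_distrib, ← mul_sum, hsum] at priced_le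
  exact le_of_add_le_add_right priced_le

variable [FloorSemiring K]

theorem pricedShortfall_floor_le (hq : 0 ≤ q) (hp : p ≤ 1) (hfrac : q - ⌊q⌋₊ ≤ p) (k : ℕ) :
    pricedShortfall p q ⌊q⌋₊ ≤ pricedShortfall p q k := by
  have floor_le : (⌊q⌋₊ : K) ≤ q := Nat.floor_le hq
  have le_floor_add_one : q ≤ (⌊q⌋₊ : K) + 1 := (Nat.lt_floor_add_one q).le
  rcases le_or_gt k ⌊q⌋₊ with hk | hk
  · have hk : (k : K) ≤ ⌊q⌋₊ := mod_cast hk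
    exact antitoneOn_pricedShortfall hp (hk.trans floor_le) floor_le hk
  · have hk : (⌊q⌋₊ : K) + 1 ≤ k := mod_cast hk
    calc pricedShortfall p q ⌊q⌋₊
        ≤ pricedShortfall p q (⌊q⌋₊ + 1) := by
          rw [pricedShortfall_of_le floor_le, pricedShortfall_of_ge le_floor_add_one]
          linarith
      _ ≤ pricedShortfall p q k :=
          monotoneOn_pricedShortfall ((sub_nonneg.2 floor_le).trans hfrac) le_floor_add_one
            (le_floor_add_one.trans hk) hk

theorem pricedShortfall_floor_add_one_le (hp : 0 ≤ p) (hfrac : p ≤ q - ⌊q⌋₊) (k : ℕ) :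
    pricedShortfall p q (⌊q⌋₊ + 1) ≤ pricedShortfall p q k := by
  have floor_le : (⌊q⌋₊ : K) ≤ q := sub_nonneg.1 (hp.trans hfrac)
  have le_floor_add_one : q ≤ (⌊q⌋₊ : K) + 1 := (Nat.lt_floor_add_one q).le
  rcases le_or_gt k ⌊q⌋₊ with hk | hk
  · have hk : (k : K) ≤ ⌊q⌋₊ := mod_cast hk
    calc pricedShortfall p q (⌊q⌋₊ + 1)
        ≤ pricedShortfall p q ⌊q⌋₊ := by
          rw [pricedShortfall_of_le floor_le, pricedShortfall_of_ge le_floor_add_one]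
          linarith
      _ ≤ pricedShortfall p q k :=
          antitoneOn_pricedShortfall (by linarith) (hk.trans floor_le) floor_le hk
  · have hk : (⌊q⌋₊ : K) + 1 ≤ k := mod_cast hk
    exact monotoneOn_pricedShortfall hp le_floor_add_one (le_floor_add_one.trans hk) hk

end PricedShortfall

section Allocation

variable {R K : Type*}

/-- The feasible set of the MVA problem: the ways of sending `n` vehicles to the zones of `R`
within the waiting demands `c`. -/
def vehicleAllocations [Fintype R] (n : ℕ) (c : R → ℕ) : Set (R → ℕ) :=
  {x | (∀ j, x j ≤ c j) ∧ ∑ j, x j = n}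

variable [CommRing K] [LinearOrder K] [FloorSemiring K]

/-- The paper's pre-assignment `x⁰`, giving each zone the integer part of its quota `q j` as far as
its demand `c j` allows. The floor is the natural-number one, which sends negative quotas to `0`. -/
def floorAllocation (q : R → K) (c : R → ℕ) (j : R) : ℕ := min ⌊q j⌋₊ (c j)

/-- The paper's `x*`: the pre-assignment with one more vehicle for every zone of `T`. That
`T` collects the largest fractional parts is not part of the definition. -/
def greedyAllocation [DecidableEq R] (q : R → K) (c : R → ℕ) (T : Finset R) (j : R) : ℕ :=
  floorAllocation q c j + if j ∈ T then 1 else 0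

theorem sum_floorAllocation_le [IsStrictOrderedRing K] [Fintype R] {n : ℕ} {q : R → K}
    (hq : ∀ j, 0 ≤ q j) (hsum : ∑ j, q j ≤ n) (c : R → ℕ) :
    ∑ j, floorAllocation q c j ≤ n := by
  have h : ∑ j, (floorAllocation q c j : K) ≤ n := calc
    ∑ j, (floorAllocation q c j : K) ≤ ∑ j, q j := sum_le_sum fun j _ =>
      (Nat.cast_le.2 (min_le_left _ _)).trans (Nat.floor_le (hq j))
    _ ≤ n := hsum
  exact_mod_cast h

variable [DecidableEq R] {q : R → K} {c : R → ℕ} {T : Finset R}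

theorem greedyAllocation_of_mem {j : R} (hj : j ∈ T) (hc : ⌊q j⌋₊ < c j) :
    greedyAllocation q c T j = ⌊q j⌋₊ + 1 := by
  simp [greedyAllocation, floorAllocation, hj, hc.le]

theorem greedyAllocation_of_notMem {j : R} (hj : j ∉ T) :
    greedyAllocation q c T j = min ⌊q j⌋₊ (c j) := by
  simp [greedyAllocation, floorAllocation, hj]

theorem sum_greedyAllocation [Fintype R] :
    ∑ j, greedyAllocation q c T j = ∑ j, floorAllocation q c j + #T := by
  simp [greedyAllocation, sum_add_distrib]

theorem greedyAllocation_le (hT : ∀ i ∈ T, ⌊q i⌋₊ < c i) (j : R) :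
    greedyAllocation q c T j ≤ c j := by
  by_cases hj : j ∈ T
  · exact (greedyAllocation_of_mem hj (hT j hj)).trans_le (hT j hj)
  · exact (greedyAllocation_of_notMem hj).trans_le (min_le_right _ _)

variable [IsStrictOrderedRing K] {p : K}

theorem pricedShortfall_greedyAllocation_le (hq : ∀ j, 0 ≤ q j) (hp : p ∈ Set.Icc 0 1)
    (hT : ∀ i ∈ T, ⌊q i⌋₊ < c i) (hpT : ∀ i ∈ T, p ≤ q i - ⌊q i⌋₊)
    (hTp : ∀ j ∉ T, ⌊q j⌋₊ < c j → q j - ⌊q j⌋₊ ≤ p) {j : R} {k : ℕ} (hk : k ≤ c j) :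
    pricedShortfall p (q j) (greedyAllocation q c T j) ≤ pricedShortfall p (q j) k := by
  by_cases hj : j ∈ T
  · rw [greedyAllocation_of_mem hj (hT j hj), Nat.cast_add_one]
    exact pricedShortfall_floor_add_one_le hp.1 (hpT j hj) k
  rw [greedyAllocation_of_notMem hj]
  rcases lt_or_ge ⌊q j⌋₊ (c j) with hc | hc
  · rw [min_eq_left hc.le]
    exact pricedShortfall_floor_le (hq j) hp.2 (hTp j hj hc) k
  · rw [min_eq_right hc]
    have c_le : (c j : K) ≤ q j := (Nat.le_floor_iff (hq j)).1 hc
    have k_le : (k : K) ≤ c j := mod_cast hk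
    exact antitoneOn_pricedShortfall hp.2 (k_le.trans c_le) c_le k_le

end Allocation

section ProportionalQuota

variable {R K : Type*} [Fintype R] [Field K]

/-- The paper's `q`: the total `n` divided among the zones in proportion to the targets `d`. It is
`0` everywhere when the targets sum to `0`, by the convention for division by zero. -/
def proportionalQuota (n : K) (d : R → K) (j : R) : K := n * d j / ∑ i, d i

theorem sum_proportionalQuota (n : K) {d : R → K} (hd : ∑ i, d i ≠ 0) :
    ∑ j, proportionalQuota n d j = n := by
  simp only [proportionalQuota, ← sum_div, ← mul_sum, mul_div_cancel_right₀ n hd]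

theorem proportionalQuota_nonneg [LinearOrder K] [IsStrictOrderedRing K] {n : K} (hn : 0 ≤ n)
    {d : R → K} (hd : ∀ j, 0 ≤ d j) (j : R) : 0 ≤ proportionalQuota n d j :=
  div_nonneg (mul_nonneg hn (hd j)) (sum_nonneg fun i _ => hd i)

end ProportionalQuota

end MVA

open MVA

theorem mva_case1_greedy_optimal_general {R K : Type*} [Fintype R] [DecidableEq R]
    [CommRing K] [LinearOrder K] [IsStrictOrderedRing K] [FloorSemiring K]
    {n : ℕ} {q : R → K} {c : R → ℕ} {T : Finset R} (hq : ∀ j, 0 ≤ q j)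
    (hT : ∀ i ∈ T, ⌊q i⌋₊ < c i) (hn : ∑ j, floorAllocation q c j + #T = n)
    (hgreedy : ∀ i ∈ T, ∀ j ∉ T, ⌊q j⌋₊ < c j → q j - ⌊q j⌋₊ ≤ q i - ⌊q i⌋₊) :
    greedyAllocation q c T ∈ vehicleAllocations n c ∧
      IsMinOn (fun x : R → ℕ => ∑ j, max 0 (q j - x j)) (vehicleAllocations n c)
        (greedyAllocation q c T) := by
  have sum_greedy : ∑ j, greedyAllocation q c T j = n := sum_greedyAllocation.trans hn
  have frac_mem (j : R) : q j - ⌊q j⌋₊ ∈ Set.Icc (0 : K) 1 :=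
    ⟨sub_nonneg.2 (Nat.floor_le (hq j)), (sub_lt_iff_lt_add'.2 (Nat.lt_floor_add_one (q j))).le⟩
  obtain ⟨p, hp, hTp, hpT⟩ := exists_mem_Icc_separating (f := fun j => q j - (⌊q j⌋₊ : K))
    (s := {j | j ∉ T ∧ ⌊q j⌋₊ < c j}) (t := T) zero_le_one (fun j _ => frac_mem j)
    (fun i _ => (frac_mem i).1) (by simpa using hgreedy)
  refine ⟨⟨greedyAllocation_le hT, sum_greedy⟩, isMinOn_iff.2 fun x ⟨hxc, hxn⟩ => ?_⟩
  refine sum_shortfall_le_of_pricedShortfall_le p (mod_cast sum_greedy.trans hxn.symm) fun j _ => ?_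
  exact pricedShortfall_greedyAllocation_le hq hp hT hpT (by simpa using hTp) (hxc j)

/-- **Proposition 2, Case 1** (optimality of the fractional-part greedy
allocation in the MVA problem): when the number `m` of leftover vehicles after
the floor pre-assignment `x⁰` is smaller than the number of zones with residual
demand, adding one vehicle to the `m` such zones with largest fractional parts
`θ j = q j − ⌊q j⌋` yields a vehicle allocation minimizing the reduced MVA
objective `∑ j, max 0 (q j − x j)`. -/
theorem mva_case1_greedy_optimal (R : Type*) [Fintype R] [DecidableEq R] [Nonempty R]
    (n : ℕ) (hn : 1 ≤ n) (c : R → ℕ) (hc : n ≤ ∑ j, c j)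
    (d : R → ℝ) (hd : ∀ j, 0 ≤ d j) (hd0 : ∃ j, d j ≠ 0)
    (q : R → ℝ) (hq : ∀ j, q j = (n : ℝ) * d j / ∑ i, d i)
    (x0 : R → ℕ) (hx0 : ∀ j, x0 j = min ⌊q j⌋₊ (c j))
    (S : Finset R) (hS : S = Finset.univ.filter fun j => ⌊q j⌋₊ < c j)
    (m : ℕ) (hm : m = n - ∑ j, x0 j)
    (θ : R → ℝ) (hθ : ∀ j, θ j = q j - (⌊q j⌋₊ : ℝ))
    (hcard : m < S.card)
    (T : Finset R) (hTS : T ⊆ S) (hTcard : T.card = m)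
    (hgreedy : ∀ i ∈ T, ∀ j ∈ S \ T, θ j ≤ θ i)
    (xstar : R → ℕ) (hxstar : ∀ j, xstar j = x0 j + if j ∈ T then 1 else 0) :
    ((∀ j, xstar j ≤ c j) ∧ ∑ j, xstar j = n) ∧
    ∀ x : R → ℕ, (∀ j, x j ≤ c j) → ∑ j, x j = n →
      ∑ j, max 0 (q j - (xstar j : ℝ)) ≤ ∑ j, max 0 (q j - (x j : ℝ)) := by
  obtain rfl : q = proportionalQuota (n : ℝ) d := funext hq
  obtain rfl : x0 = floorAllocation (proportionalQuota (n : ℝ) d) c := funext hx0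
  obtain rfl : xstar = greedyAllocation (proportionalQuota (n : ℝ) d) c T := funext hxstar
  have d_sum_ne_zero : ∑ i, d i ≠ 0 := fun h =>
    hd0.elim fun j hj => hj ((sum_eq_zero_iff_of_nonneg fun i _ => hd i).1 h j (mem_univ j))
  have q_nonneg := proportionalQuota_nonneg n.cast_nonneg hd
  have floor_sum_le := sum_floorAllocation_le q_nonneg (sum_proportionalQuota _ d_sum_ne_zero).le c
  have mem_S (j : R) : j ∈ S ↔ ⌊proportionalQuota (n : ℝ) d j⌋₊ < c j := by simp [hS]
  obtain ⟨feasible, optimal⟩ := mva_case1_greedy_optimal_general (n := n) q_nonneg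
    (fun i hi => (mem_S i).1 (hTS hi)) (by rw [hTcard, hm, Nat.add_sub_cancel' floor_sum_le])
    fun i hi j hj hc => by
      simpa only [hθ] using hgreedy i hi j (mem_sdiff.2 ⟨(mem_S j).2 hc, hj⟩)
  exact ⟨feasible, fun x hxc hxn => isMinOn_iff.1 optimal x ⟨hxc, hxn⟩⟩
end

section
/- (Proposition 2, Case 2: value of MVA with abundant remaining supply.) Write x⁰_j = min(⌊q_j⌋, c_j), S = {j ∈ R : c_j > ⌊q_j⌋}, and m = n − ∑_{j∈R} x⁰_j (a nonnegative integer). Suppose |S| ≤ m. Then the minimum over vehicle allocations x of ∑_{j∈R} max(0, q_j − x_j) equals ∑_{j∈R} max(0, q_j − c_j); in particular, every zone j with q_j ≤ c_j incurs zero deficit at an optimum, and the only deficits come from zones whose waiting demand c_j falls below the proportional target q_j. -/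
open Finset

/-!
Raising an allocation never increases the objective, so `∑ j, max 0 (q j - c j)` is a lower bound.
It is attained by any allocation `x ≤ c` that exceeds `⌊q j⌋₊` in every zone where `x j < c j`:
such a zone has no deficit under `x j`, nor under `c j`. These allocations are those lying between
`fun j ↦ min (⌊q j⌋₊ + 1) (c j)` and `c`; the lower end has total `∑ j, x0 j + #S`, so they include
one of total `n` as soon as `#S ≤ m`.
-/

theorem exists_mem_Icc_sum_eq_s8 {ι : Type*} [Fintype ι] {f g : ι → ℕ} (hfg : f ≤ g) {n : ℕ}
    (hfn : ∑ i, f i ≤ n) (hng : n ≤ ∑ i, g i) : ∃ x ∈ Set.Icc f g, ∑ i, x i = n := by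
  have hroom : n - ∑ i, f i ≤ (Finsupp.equivFunOnFinite.symm (g - f)).degree := by
    rw [Finsupp.degree_eq_sum]
    simpa [sum_tsub_distrib univ fun i _ ↦ hfg i] using Nat.sub_le_sub_right hng _
  obtain ⟨y, hy, hysum⟩ := Finsupp.exists_le_degree_eq _ _ hroom
  rw [Finsupp.degree_eq_sum] at hysum
  refine ⟨f + y, ⟨fun i ↦ Nat.le_add_right _ _, fun i ↦ ?_⟩, ?_⟩
  · exact Nat.add_le_of_le_sub' (hfg i) (hy i)
  · simp only [Pi.add_apply, sum_add_distrib, hysum, Nat.add_sub_cancel' hfn]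

theorem sum_min_add_one {ι : Type*} (s : Finset ι) (f g : ι → ℕ) :
    ∑ i ∈ s, min (f i + 1) (g i) = ∑ i ∈ s, min (f i) (g i) + #{i ∈ s | f i < g i} := by
  rw [card_filter, ← sum_add_distrib]
  refine sum_congr rfl fun i _ ↦ ?_
  split_ifs <;> omega

theorem sum_mul_div_sum_eq {ι K : Type*} [DivisionSemiring K] {s : Finset ι} {d : ι → K}
    (hd : ∑ i ∈ s, d i ≠ 0) (a : K) : ∑ j ∈ s, a * d j / ∑ i ∈ s, d i = a := by
  rw [← sum_div, ← mul_sum, mul_div_cancel_right₀ _ hd]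

theorem sum_natFloor_le_natFloor_sum {ι K : Type*} [Semiring K] [LinearOrder K] [IsOrderedRing K]
    [FloorSemiring K] (s : Finset ι) {f : ι → K} (hf : ∀ i ∈ s, 0 ≤ f i) :
    ∑ i ∈ s, ⌊f i⌋₊ ≤ ⌊∑ i ∈ s, f i⌋₊ := by
  refine Nat.le_floor ?_
  push_cast
  exact sum_le_sum fun i hi ↦ Nat.floor_le (hf i hi)

theorem sum_natFloor_mul_div_sum_le {ι K : Type*} [Semifield K] [LinearOrder K]
    [IsStrictOrderedRing K] [FloorSemiring K] {s : Finset ι} {d : ι → K} (hd : ∀ i ∈ s, 0 ≤ d i)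
    (hd0 : ∃ i ∈ s, d i ≠ 0) {a : K} (ha : 0 ≤ a) :
    ∑ j ∈ s, ⌊a * d j / ∑ i ∈ s, d i⌋₊ ≤ ⌊a⌋₊ := by
  have hsum : ∑ i ∈ s, d i ≠ 0 := by
    simpa [sum_eq_zero_iff_of_nonneg hd] using hd0
  calc ∑ j ∈ s, ⌊a * d j / ∑ i ∈ s, d i⌋₊
      ≤ ⌊∑ j ∈ s, a * d j / ∑ i ∈ s, d i⌋₊ := sum_natFloor_le_natFloor_sum s fun j hj ↦
        div_nonneg (mul_nonneg ha (hd j hj)) (sum_nonneg hd)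
    _ = ⌊a⌋₊ := by rw [sum_mul_div_sum_eq hsum]

section OrderedRing

variable {K : Type*} [Ring K] [LinearOrder K] [IsOrderedRing K]

theorem antitone_sum_max_zero_sub_natCast {ι : Type*} [Fintype ι] (q : ι → K) :
    Antitone fun x : ι → ℕ ↦ ∑ i, max 0 (q i - x i) := fun x y hxy ↦ by
  dsimp only
  gcongr with i
  exact hxy i

variable [FloorSemiring K]

theorem max_zero_sub_natCast_eq_of_min_floor_add_one_le {a : K} {k l : ℕ}
    (hk : min (⌊a⌋₊ + 1) l ≤ k) (hkl : k ≤ l) : max 0 (a - k) = max 0 (a - l) := by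
  obtain rfl | hlt := hkl.eq_or_lt
  · rfl
  · have hak : a ≤ k := (Nat.lt_of_floor_lt (by omega)).le
    have hal : a ≤ l := hak.trans (Nat.mono_cast hkl)
    rw [max_eq_left (sub_nonpos.2 hak), max_eq_left (sub_nonpos.2 hal)]

theorem mva_case2_value_general {R : Type*} [Fintype R] {n : ℕ} {c : R → ℕ} (hc : n ≤ ∑ j, c j)
    {q : R → K} (hcard : ∑ j, min ⌊q j⌋₊ (c j) + #{j | ⌊q j⌋₊ < c j} ≤ n) :
    IsLeast {v : K | ∃ x : R → ℕ,
        (∀ j, x j ≤ c j) ∧ (∑ j, x j = n) ∧ v = ∑ j, max 0 (q j - (x j : K))}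
      (∑ j, max 0 (q j - (c j : K))) := by
  constructor
  · rw [← sum_min_add_one] at hcard
    obtain ⟨x, ⟨hfloor, hxc⟩, hxn⟩ := exists_mem_Icc_sum_eq_s8 (fun j ↦ min_le_right _ _) hcard hc
    exact ⟨x, hxc, hxn, sum_congr rfl fun j _ ↦
      (max_zero_sub_natCast_eq_of_min_floor_add_one_le (hfloor j) (hxc j)).symm⟩
  · rintro _ ⟨x, hxc, -, rfl⟩
    exact antitone_sum_max_zero_sub_natCast q hxc

end OrderedRing

/-- **Proposition 2, Case 2** (value of the MVA problem with abundant
remaining supply): if the number of zones with residual demand after the floor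
pre-assignment is at most the number `m` of leftover vehicles, then the
minimum of the reduced MVA objective `∑ j, max 0 (q j − x j)` over vehicle
allocations equals `∑ j, max 0 (q j − c j)`: the only deficits come from zones
whose waiting demand `c j` falls below the proportional target `q j`. -/
theorem mva_case2_value (R : Type*) [Fintype R] [DecidableEq R] [Nonempty R]
    (n : ℕ) (hn : 1 ≤ n) (c : R → ℕ) (hc : n ≤ ∑ j, c j)
    (d : R → ℝ) (hd : ∀ j, 0 ≤ d j) (hd0 : ∃ j, d j ≠ 0)
    (q : R → ℝ) (hq : ∀ j, q j = (n : ℝ) * d j / ∑ i, d i)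
    (x0 : R → ℕ) (hx0 : ∀ j, x0 j = min ⌊q j⌋₊ (c j))
    (S : Finset R) (hS : S = Finset.univ.filter fun j => ⌊q j⌋₊ < c j)
    (m : ℕ) (hm : m = n - ∑ j, x0 j)
    (hcard : S.card ≤ m) :
    sInf {v : ℝ | ∃ x : R → ℕ,
        (∀ j, x j ≤ c j) ∧ (∑ j, x j = n) ∧
        v = ∑ j, max 0 (q j - (x j : ℝ))} =
      ∑ j, max 0 (q j - (c j : ℝ)) := by
  have hfloor : ∑ j, ⌊q j⌋₊ ≤ n := by
    simpa [hq] using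
      sum_natFloor_mul_div_sum_le (s := univ) (fun j _ ↦ hd j) (by simpa using hd0) n.cast_nonneg
  have hx0_sum : ∑ j, x0 j ≤ n :=
    (sum_le_sum fun j _ ↦ (hx0 j).trans_le (min_le_left _ _)).trans hfloor
  have hcover : ∑ j, min ⌊q j⌋₊ (c j) + #{j | ⌊q j⌋₊ < c j} ≤ n := by
    simp only [← hx0, ← hS]
    omega
  exact (mva_case2_value_general hc hcover).csInf_eq
end

section
/- (Optimality of the greedy relocation rounding.) Let m = l − ∑_{j∈R} ⌊p_j⌋ and S = {j ∈ R : p_j ∉ ℤ}. Then 0 ≤ m ≤ |S|, and for every T ⊆ S with |T| = m such that E_i ≥ E_j for all i ∈ T and j ∈ S∖T, the point z* defined by z*_j = ⌊p_j⌋ + 1 for j ∈ T and z*_j = ⌊p_j⌋ otherwise is feasible for the relocation rounding program and maximizes its objective: for every feasible z, ∑_{j∈R} E_j·(z_j − ⌊p_j⌋) ≤ ∑_{j∈R} E_j·(z*_j − ⌊p_j⌋). That is, the greedy algorithm (assigning the m surplus vehicles to the zones in S with largest weights E_j) globally solves the relocation integer program. -/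
open Finset
open scoped Classical

/-!
A feasible rounding `z` differs from `⌊p⌋` by a vector with entries in `[0, 1]`, supported on the
zones with non-integral target and of total mass `m`. Choose a threshold `c` separating the weights
on `T` from those on `S \ T`. Replacing the weights `w` by `w - c` changes the objective by the
constant `c * m`, and afterwards the weights are nonnegative on `T` and nonpositive on `S \ T`, so
the indicator of `T` is optimal coordinate by coordinate.
-/

section Bathtub

variable {ι : Type*}

theorem exists_threshold {α : Type*} [LinearOrder α] [Nonempty α] {A B : Finset ι} {f : ι → α}
    (h : ∀ i ∈ A, ∀ j ∈ B, f j ≤ f i) : ∃ c, (∀ i ∈ A, c ≤ f i) ∧ ∀ j ∈ B, f j ≤ c := by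
  rcases A.eq_empty_or_nonempty with rfl | hA
  · obtain ⟨c, hc⟩ := (B.image f).exists_le
    exact ⟨c, by simp, fun j hj => hc _ (mem_image_of_mem f hj)⟩
  · obtain ⟨i, hi, hmin⟩ := A.exists_min_image f hA
    exact ⟨f i, hmin, h i hi⟩

theorem sum_mul_le_sum_of_mem_Icc {K : Type*} [Ring K] [LinearOrder K] [IsOrderedRing K]
    {S T : Finset ι} {w x : ι → K} (hTS : T ⊆ S) (hT : ∀ i ∈ T, ∀ j ∈ S \ T, w j ≤ w i)
    (hx : ∀ i ∈ S, x i ∈ Set.Icc 0 1) (hsum : ∑ i ∈ S, x i = #T) :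
    ∑ i ∈ S, w i * x i ≤ ∑ i ∈ T, w i := by
  obtain ⟨c, hcT, hcS⟩ := exists_threshold hT
  have hpoint : ∀ i ∈ S, (w i - c) * x i ≤ if i ∈ T then w i - c else 0 := by
    intro i hi
    obtain ⟨hx₀, hx₁⟩ := hx i hi
    split_ifs with hiT
    · exact mul_le_of_le_one_right (sub_nonneg.2 (hcT i hiT)) hx₁
    · exact mul_nonpos_of_nonpos_of_nonneg
        (sub_nonpos.2 (hcS i (mem_sdiff.2 ⟨hi, hiT⟩))) hx₀
  calc ∑ i ∈ S, w i * x i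
      = ∑ i ∈ S, (w i - c) * x i + c * #T := by
        simp only [sub_mul, sum_sub_distrib, ← mul_sum, hsum, sub_add_cancel]
    _ ≤ ∑ i ∈ S, (if i ∈ T then w i - c else 0) + c * #T := by gcongr with i hi; exact hpoint i hi
    _ = ∑ i ∈ T, (w i - c) + c * #T := by rw [sum_ite_mem, inter_eq_right.2 hTS]
    _ = ∑ i ∈ T, w i := by
        rw [sum_sub_distrib, sum_const, nsmul_eq_mul, Nat.cast_comm, sub_add_cancel]

end Bathtub

theorem sum_mul_div_sum {ι F : Type*} [Semifield F] {s : Finset ι} {a : ι → F}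
    (ha : ∑ i ∈ s, a i ≠ 0) (c : F) : ∑ j ∈ s, a j * c / ∑ i ∈ s, a i = c := by
  rw [← sum_div, ← sum_mul, mul_div_cancel_left₀ c ha]

section Rounding

variable {R 𝕜 K : Type*} [Fintype R] [Semiring 𝕜] [LinearOrder 𝕜] [FloorSemiring 𝕜]
  [Ring K] {p : R → 𝕜} {l : ℕ} {z : R → ℕ} {T : Finset R} {w : R → K}

theorem sum_natFloor_le_of_sum_eq [IsStrictOrderedRing 𝕜] (hp : ∀ j, 0 ≤ p j)
    (hsum : ∑ j, p j = l) : ∑ j, ⌊p j⌋₊ ≤ l := by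
  have h : ∑ j, (⌊p j⌋₊ : 𝕜) ≤ l := hsum ▸ sum_le_sum fun j _ => Nat.floor_le (hp j)
  exact_mod_cast h

theorem le_sum_natCeil_of_sum_eq [IsStrictOrderedRing 𝕜] (hsum : ∑ j, p j = l) :
    l ≤ ∑ j, ⌈p j⌉₊ := by
  have h : (l : 𝕜) ≤ ∑ j, (⌈p j⌉₊ : 𝕜) := hsum ▸ sum_le_sum fun j _ => Nat.le_ceil (p j)
  exact_mod_cast h

theorem natFloor_lt_natCeil_of_ne {a : 𝕜} (ha : 0 ≤ a) (hne : a ≠ ⌊a⌋₊) :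
    ⌊a⌋₊ < ⌈a⌉₊ :=
  Nat.lt_ceil.2 ((Nat.floor_le ha).lt_of_ne' hne)

/-- The feasible points of the relocation rounding program with targets `p` and `l` vehicles. -/
def IsRounding (p : R → 𝕜) (l : ℕ) (z : R → ℕ) : Prop :=
  (∀ j, ⌊p j⌋₊ ≤ z j ∧ z j ≤ ⌈p j⌉₊) ∧ ∑ j, z j = l

/-- The zones with non-integral target, the only ones where a rounding has a choice. Integrality is
tested against the natural-number floor, so a negative target counts as non-integral. -/
def nonIntegralZones (p : R → 𝕜) : Finset R :=
  {j | p j ≠ ⌊p j⌋₊}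

/-- The assignment giving one surplus vehicle, on top of the rounded-down target, to each zone
of `T`; for greedy `T` it is the point `z*` of the relocation problem. -/
noncomputable def roundUpOn (p : R → 𝕜) (T : Finset R) (j : R) : ℕ :=
  ⌊p j⌋₊ + if j ∈ T then 1 else 0

theorem mem_nonIntegralZones {j : R} : j ∈ nonIntegralZones p ↔ p j ≠ ⌊p j⌋₊ := by
  simp [nonIntegralZones]

theorem natCeil_le_roundUpOn (j : R) :
    ⌈p j⌉₊ ≤ roundUpOn p (nonIntegralZones p) j := by
  unfold roundUpOn
  split_ifs with hj
  · exact Nat.ceil_le_floor_add_one (p j)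
  · exact Nat.ceil_le.2 (not_ne_iff.1 (mem_nonIntegralZones.not.1 hj)).le

theorem sum_roundUpOn (p : R → 𝕜) (T : Finset R) :
    ∑ j, roundUpOn p T j = ∑ j, ⌊p j⌋₊ + #T := by
  simp [roundUpOn, sum_add_distrib]

theorem sub_sum_natFloor_le_card (hl : l ≤ ∑ j, ⌈p j⌉₊) :
    l - ∑ j, ⌊p j⌋₊ ≤ #(nonIntegralZones p) :=
  Nat.sub_le_iff_le_add'.2 <| calc
    l ≤ ∑ j, ⌈p j⌉₊ := hl
    _ ≤ ∑ j, roundUpOn p (nonIntegralZones p) j := sum_le_sum fun j _ => natCeil_le_roundUpOn j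
    _ = ∑ j, ⌊p j⌋₊ + #(nonIntegralZones p) := sum_roundUpOn p _

theorem isRounding_roundUpOn [IsStrictOrderedRing 𝕜] (hp : ∀ j, 0 ≤ p j)
    (hT : T ⊆ nonIntegralZones p) (hsum : ∑ j, ⌊p j⌋₊ + #T = l) :
    IsRounding p l (roundUpOn p T) := by
  refine ⟨fun j => ⟨Nat.le_add_right _ _, ?_⟩, (sum_roundUpOn p T).trans hsum⟩
  unfold roundUpOn
  split_ifs with hj
  · exact natFloor_lt_natCeil_of_ne (hp j) (mem_nonIntegralZones.1 (hT hj))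
  · exact Nat.floor_le_ceil (p j)

theorem sum_mul_roundUpOn_sub_natFloor (p : R → 𝕜) (T : Finset R) (w : R → K) :
    ∑ j, w j * ((roundUpOn p T j : K) - ⌊p j⌋₊) = ∑ j ∈ T, w j := by
  simp [roundUpOn]

namespace IsRounding

variable [LinearOrder K] [IsStrictOrderedRing K]

theorem sub_natFloor_mem_Icc (hz : IsRounding p l z) (j : R) :
    (z j : K) - ⌊p j⌋₊ ∈ Set.Icc 0 1 := by
  have hle : z j ≤ 1 + ⌊p j⌋₊ :=
    (hz.1 j).2.trans ((Nat.ceil_le_floor_add_one (p j)).trans_eq (add_comm _ _))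
  exact ⟨sub_nonneg.2 (mod_cast (hz.1 j).1), sub_le_iff_le_add.2 (mod_cast hle)⟩

theorem eq_natFloor (hz : IsRounding p l z) {j : R}
    (hj : j ∉ nonIntegralZones p) : z j = ⌊p j⌋₊ := by
  have hceil : ⌈p j⌉₊ ≤ ⌊p j⌋₊ := by simpa [roundUpOn, hj] using natCeil_le_roundUpOn (p := p) j
  exact ((hz.1 j).2.trans hceil).antisymm (hz.1 j).1

theorem sum_mul_sub_natFloor_le (hz : IsRounding p l z)
    (hTS : T ⊆ nonIntegralZones p) (hcard : ∑ j, ⌊p j⌋₊ + #T = l)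
    (hT : ∀ i ∈ T, ∀ j ∈ nonIntegralZones p \ T, w j ≤ w i) :
    ∑ j, w j * ((z j : K) - ⌊p j⌋₊) ≤ ∑ j ∈ T, w j := by
  have hzero : ∀ j ∉ nonIntegralZones p, (z j : K) - ⌊p j⌋₊ = 0 := fun j hj => by
    rw [hz.eq_natFloor hj, sub_self]
  have hmass : ∑ j ∈ nonIntegralZones p, ((z j : K) - ⌊p j⌋₊) = #T := calc
    _ = ∑ j, ((z j : K) - ⌊p j⌋₊) := sum_subset (subset_univ _) fun j _ => hzero j
    _ = #T := by
      rw [sum_sub_distrib, sub_eq_iff_eq_add']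
      exact_mod_cast hz.2.trans hcard.symm
  calc ∑ j, w j * ((z j : K) - ⌊p j⌋₊)
      = ∑ j ∈ nonIntegralZones p, w j * ((z j : K) - ⌊p j⌋₊) :=
        (sum_subset (subset_univ _) fun j _ hj => by rw [hzero j hj, mul_zero]).symm
    _ ≤ ∑ j ∈ T, w j :=
        sum_mul_le_sum_of_mem_Icc hTS hT (fun j _ => hz.sub_natFloor_mem_Icc j) hmass

end IsRounding

end Rounding

theorem relocation_greedy_optimal_general {R 𝕜 K : Type*} [Fintype R]
    [Semiring 𝕜] [LinearOrder 𝕜] [IsStrictOrderedRing 𝕜] [FloorSemiring 𝕜]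
    [Ring K] [LinearOrder K] [IsStrictOrderedRing K]
    {w : R → K} {p : R → 𝕜} (hp : ∀ j, 0 ≤ p j)
    {l : ℕ} (hfloor : ∑ j, ⌊p j⌋₊ ≤ l) (hceil : l ≤ ∑ j, ⌈p j⌉₊)
    {m : ℕ} (hm : m = l - ∑ j, ⌊p j⌋₊)
    {S : Finset R} (hS : S = univ.filter fun j => p j ≠ ⌊p j⌋₊) :
    m ≤ #S ∧
    ∀ T ⊆ S, #T = m →
      (∀ i ∈ T, ∀ j ∈ S \ T, w j ≤ w i) →
      ∀ zstar : R → ℕ, (∀ j, zstar j = ⌊p j⌋₊ + if j ∈ T then 1 else 0) →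
        ((∀ j, ⌊p j⌋₊ ≤ zstar j ∧ zstar j ≤ ⌈p j⌉₊) ∧ ∑ j, zstar j = l) ∧
        ∀ z : R → ℕ, (∀ j, ⌊p j⌋₊ ≤ z j ∧ z j ≤ ⌈p j⌉₊) → ∑ j, z j = l →
          ∑ j, w j * ((z j : K) - ⌊p j⌋₊) ≤ ∑ j, w j * ((zstar j : K) - ⌊p j⌋₊) := by
  obtain rfl : S = nonIntegralZones p := hS
  subst hm
  refine ⟨sub_sum_natFloor_le_card hceil, fun T hTS hcard hT zstar hzstar => ?_⟩
  obtain rfl : zstar = roundUpOn p T := funext hzstar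
  have hsum : ∑ j, ⌊p j⌋₊ + #T = l := hcard ▸ Nat.add_sub_cancel' hfloor
  refine ⟨isRounding_roundUpOn hp hTS hsum, fun z hz hzl => ?_⟩
  rw [sum_mul_roundUpOn_sub_natFloor]
  exact IsRounding.sum_mul_sub_natFloor_le ⟨hz, hzl⟩ hTS hsum hT

/-- **Optimality of the greedy relocation rounding**: with proportional
fractional targets `p j = E j · l / ∑ i, E i`, the number `m = l − ∑ j, ⌊p j⌋`
of surplus vehicles satisfies `m ≤ |S|` where `S` is the set of zones with
non-integral target, and assigning the `m` surplus vehicles to the zones of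
`S` with largest weights `E j` yields a feasible rounding maximizing
`∑ j, E j · (z j − ⌊p j⌋)` over all feasible roundings. -/
theorem relocation_greedy_optimal (R : Type*) [Fintype R] [Nonempty R]
    (E : R → ℝ) (hE : ∀ j, 0 ≤ E j) (hEpos : 0 < ∑ i, E i)
    (l : ℕ)
    (p : R → ℝ) (hp : ∀ j, p j = E j * (l : ℝ) / ∑ i, E i)
    (m : ℕ) (hm : m = l - ∑ j, ⌊p j⌋₊)
    (S : Finset R) (hS : S = Finset.univ.filter fun j => p j ≠ (⌊p j⌋₊ : ℝ)) :
    m ≤ S.card ∧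
    ∀ T ⊆ S, T.card = m →
      (∀ i ∈ T, ∀ j ∈ S \ T, E j ≤ E i) →
      ∀ zstar : R → ℕ, (∀ j, zstar j = ⌊p j⌋₊ + if j ∈ T then 1 else 0) →
        ((∀ j, ⌊p j⌋₊ ≤ zstar j ∧ zstar j ≤ ⌈p j⌉₊) ∧ ∑ j, zstar j = l) ∧
        ∀ z : R → ℕ, (∀ j, ⌊p j⌋₊ ≤ z j ∧ z j ≤ ⌈p j⌉₊) → ∑ j, z j = l →
          ∑ j, E j * ((z j : ℝ) - (⌊p j⌋₊ : ℝ)) ≤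
            ∑ j, E j * ((zstar j : ℝ) - (⌊p j⌋₊ : ℝ)) := by
  have hp₀ : ∀ j, 0 ≤ p j := fun j => hp j ▸ div_nonneg (mul_nonneg (hE j) l.cast_nonneg) hEpos.le
  have hsum : ∑ j, p j = l := by simp only [hp, sum_mul_div_sum hEpos.ne']
  exact relocation_greedy_optimal_general hp₀ (sum_natFloor_le_of_sum_eq hp₀ hsum)
    (le_sum_natCeil_of_sum_eq hsum) hm hS
end

section
/- (Proposition 3, second part: integrality of the VOM linear-programming relaxation.) Suppose the VOM-LP feasible set Y is nonempty. Then for every cost function w : V × C → ℝ, the minimum of ∑_{(v,c)} w_{v,c}·y_{v,c} over y ∈ Y is attained, and it is attained at some y* ∈ Y with y*_{v,c} ∈ {0,1} for all (v,c) ∈ V × C. Consequently, the optimal solution of the binary vehicle-and-order matching problem VOM can be obtained by solving its linear-programming relaxation. -/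
open Finset

/-- The feasible set of the VOM linear-programming relaxation. -/
def VOMFeasible (V C R : Type*) [Fintype V] [Fintype C] [Fintype R]
    [DecidableEq R] (θ : C → R) (x : R → ℕ) (y : V → C → ℝ) : Prop :=
  (∀ v c, 0 ≤ y v c ∧ y v c ≤ 1) ∧
  (∀ c, ∑ v, y v c ≤ 1) ∧
  (∀ v, ∑ c, y v c = 1) ∧
  (∀ j, ∑ c ∈ Finset.univ.filter fun c => θ c = j, ∑ v, y v c = (x j : ℝ))

/-! The relaxation is a projection of a face of a Birkhoff polytope. In a feasible point, zone `j`
leaves an integral amount of customer mass unmatched, namely its number of customers minus `x j`.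
Giving the zone that many dummy vehicles, among which the unmatched mass is spread evenly, turns the
point into a doubly stochastic matrix. By Birkhoff's theorem this matrix is a convex combination of
bijections inside its support, so each of them keeps every dummy vehicle in its zone and hence
restricts to a binary feasible point. Thus the relaxation is the convex hull of the binary points,
and a linear cost is minimised over it at one of those finitely many points. -/

section Birkhoff

variable {𝕜 m n : Type*} [Fintype m] [Fintype n]

theorem card_eq_card_of_sum_row_of_sum_col [NonAssocSemiring 𝕜] [CharZero 𝕜] {M : m → n → 𝕜}
    (hrow : ∀ i, ∑ j, M i j = 1) (hcol : ∀ j, ∑ i, M i j = 1) :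
    Fintype.card m = Fintype.card n := by
  have hsum : ∑ i, ∑ j, M i j = ∑ j, ∑ i, M i j := sum_comm
  simpa [hrow, hcol] using hsum

variable [Field 𝕜] [LinearOrder 𝕜] [IsStrictOrderedRing 𝕜] [DecidableEq n]

theorem mem_convexHull_single_equiv_of_doublyStochastic {M : m → n → 𝕜}
    (hnonneg : ∀ i j, 0 ≤ M i j) (hrow : ∀ i, ∑ j, M i j = 1) (hcol : ∀ j, ∑ i, M i j = 1) :
    M ∈ convexHull 𝕜
      ((fun (σ : m ≃ n) i => Pi.single (σ i) 1) '' {σ | ∀ i, 0 < M i (σ i)}) := by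
  let e : m ≃ n := Fintype.equivOfCardEq (card_eq_card_of_sum_row_of_sum_col hrow hcol)
  have hN : Matrix.of (M ∘ e.symm) ∈ doublyStochastic 𝕜 n :=
    mem_doublyStochastic_iff_sum.2 ⟨fun a => hnonneg (e.symm a), fun a => hrow (e.symm a),
      fun j => (e.symm.sum_comp fun i => M i j).trans (hcol j)⟩
  obtain ⟨p, hp_nonneg, hp_sum, hpN⟩ := exists_eq_sum_perm_of_mem_doublyStochastic hN
  have hM : ∀ i j, M i j = ∑ σ, if σ (e i) = j then p σ else 0 := by
    intro i j
    simpa [Matrix.sum_apply, Equiv.Perm.permMatrix, PEquiv.toMatrix_toPEquiv_apply,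
      Pi.single_apply, eq_comm] using (congr_fun₂ hpN (e i) j).symm
  have hsupport : ∀ σ, p σ ≠ 0 → ∀ i, 0 < M i (σ (e i)) := by
    intro σ hσ i
    rw [hM]
    refine sum_pos' (fun τ _ => ?_) ⟨σ, mem_univ σ, ?_⟩
    · split_ifs
      exacts [hp_nonneg τ, le_rfl]
    · simpa using (hp_nonneg σ).lt_of_ne' hσ
  have hcomb : M = ∑ᶠ σ, p σ • fun i => Pi.single (σ (e i)) 1 := by
    ext i j
    simp [finsum_eq_sum_of_fintype, hM, Pi.single_apply, eq_comm]
  -- Stated with `finsum`, convexity only asks for membership of the points of nonzero weight.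
  rw [← finsum_eq_sum_of_fintype] at hp_sum
  refine Set.mem_of_eq_of_mem hcomb ?_
  exact (convex_convexHull 𝕜 _).finsum_mem hp_nonneg hp_sum fun σ hσ =>
    subset_convexHull 𝕜 _ ⟨e.trans σ, hsupport σ hσ, rfl⟩

end Birkhoff

theorem card_filter_inl_add_card_filter_inr {α β γ : Type*} [Fintype α] [Fintype β] [Fintype γ]
    (σ : α ⊕ β ≃ γ) (p : γ → Prop) [DecidablePred p] :
    #{a | p (σ (Sum.inl a))} + #{b | p (σ (Sum.inr b))} = #{c | p c} := by
  simp only [card_filter, ← σ.sum_comp fun c => if p c then 1 else 0, Fintype.sum_sum_type]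

theorem exists_forall_le_convexHull_of_concaveOn {𝕜 E β : Type*} [Field 𝕜] [LinearOrder 𝕜]
    [IsStrictOrderedRing 𝕜] [AddCommGroup E] [Module 𝕜 E] [AddCommGroup β] [LinearOrder β]
    [IsOrderedAddMonoid β] [Module 𝕜 β] [IsStrictOrderedModule 𝕜 β] {s : Set E} {f : E → β}
    (hs : s.Finite) (hs_nonempty : s.Nonempty) (hf : ConcaveOn 𝕜 (convexHull 𝕜 s) f) :
    ∃ z ∈ s, ∀ y ∈ convexHull 𝕜 s, f z ≤ f y := by
  obtain ⟨z, hz, hz_min⟩ := Set.exists_min_image s f hs hs_nonempty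
  refine ⟨z, hz, fun y hy => ?_⟩
  obtain ⟨u, hu, huy⟩ := hf.exists_le_of_mem_convexHull (subset_convexHull 𝕜 s) hy
  exact (hz_min u hu).trans huy

theorem isLinearMap_sum_sum_mul {𝕜 : Type*} [CommSemiring 𝕜]
    {ι κ : Type*} [Fintype ι] [Fintype κ] (w : ι → κ → 𝕜) :
    IsLinearMap 𝕜 fun y : ι → κ → 𝕜 => ∑ i, ∑ k, w i k * y i k where
  map_add y z := by simp only [Pi.add_apply, mul_add, sum_add_distrib]
  map_smul a y := by simp only [Pi.smul_apply, smul_eq_mul, mul_sum, mul_left_comm]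

section VOM

variable {V C R : Type*} [Fintype V] [Fintype C] [DecidableEq R]
  {θ : C → R} {x : R → ℕ} {y : V → C → ℝ}

/-- The feasible set of the binary program VOM. -/
def vomBinarySet (V : Type*) [Fintype V] [Fintype R] (θ : C → R) (x : R → ℕ) : Set (V → C → ℝ) :=
  {z | VOMFeasible V C R θ x z ∧ ∀ v c, z v c = 0 ∨ z v c = 1}

theorem finite_vomBinarySet [Fintype R] : (vomBinarySet V θ x).Finite := by
  have hcube : (Set.univ.pi fun _ : V => Set.univ.pi fun _ : C => ({0, 1} : Set ℝ)).Finite :=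
    Set.Finite.pi fun _ => Set.Finite.pi fun _ => Set.toFinite _
  exact hcube.subset fun z hz v _ c _ => hz.2 v c

theorem single_mem_vomBinarySet [Fintype R] [DecidableEq C] {f : V → C} (hf : Function.Injective f)
    (hx : ∀ j, #{v | θ (f v) = j} = x j) :
    (fun v => Pi.single (f v) 1) ∈ vomBinarySet V θ x := by
  have hbinary : ∀ v c, (Pi.single (f v) 1 : C → ℝ) c = 0 ∨ (Pi.single (f v) 1 : C → ℝ) c = 1 := by
    intro v c
    rw [Pi.single_apply]
    exact (ite_eq_or_eq _ _ _).symm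
  refine ⟨⟨fun v c => ?_, fun c => ?_, fun v => ?_, fun j => ?_⟩, hbinary⟩
  · rcases hbinary v c with h | h <;> simp [h]
  · simp only [Pi.single_apply, sum_boole]
    have hfiber : #{v | c = f v} ≤ 1 := card_le_one.2 fun v hv u hu =>
      hf ((mem_filter.1 hv).2.symm.trans (mem_filter.1 hu).2)
    exact_mod_cast hfiber
  · simp
  · rw [sum_comm]
    simp [Pi.single_apply, ← hx j]

/-- The number of customers with destination `j` that a matching meeting the demand `x` leaves
unmatched. The subtraction is truncated, which is harmless once a feasible point exists, by
`VOMFeasible.demand_le`. -/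
def unmatchedCard (θ : C → R) (x : R → ℕ) (j : R) : ℕ := #{c | θ c = j} - x j

/-- Dummy vehicles: as many in each zone as there are unmatched customers with that destination. -/
abbrev DummyVehicle (θ : C → R) (x : R → ℕ) : Type _ := Σ j, Fin (unmatchedCard θ x j)

/-- The assignment of dummy vehicles to customers that complements `y`: the unmatched mass of each
customer is divided evenly among the dummy vehicles of the customer's destination. -/
noncomputable def dummyAssignment (θ : C → R) (x : R → ℕ) (y : V → C → ℝ) :
    DummyVehicle θ x → C → ℝ :=
  fun d c => if θ c = d.1 then (1 - ∑ v, y v c) / unmatchedCard θ x d.1 else 0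

theorem card_filter_dummyVehicle [Fintype (DummyVehicle θ x)] (j : R) :
    #{d : DummyVehicle θ x | d.1 = j} = unmatchedCard θ x j := by
  rw [← Fintype.card_subtype, Fintype.card_congr (Equiv.sigmaSubtype j), Fintype.card_fin]

theorem card_filter_inl_eq_demand {j : R} (hxj : x j ≤ #{c | θ c = j})
    {σ : V ⊕ DummyVehicle θ x ≃ C} (hσ : ∀ d, θ (σ (Sum.inr d)) = d.1) :
    #{v | θ (σ (Sum.inl v)) = j} = x j := by
  have := Fintype.ofInjective (σ ∘ Sum.inr) (σ.injective.comp Sum.inr_injective)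
  have hsplit : #{v | θ (σ (Sum.inl v)) = j} + unmatchedCard θ x j = #{c | θ c = j} := by
    simpa only [hσ, card_filter_dummyVehicle] using card_filter_inl_add_card_filter_inr σ (θ · = j)
  exact Nat.add_right_cancel (hsplit.trans (Nat.add_sub_cancel' hxj).symm)

variable [Fintype R]

namespace VOMFeasible

theorem one_sub_sum_nonneg (hy : VOMFeasible V C R θ x y) (c : C) : 0 ≤ 1 - ∑ v, y v c :=
  sub_nonneg.2 (hy.2.1 c)

theorem sum_one_sub_sum (hy : VOMFeasible V C R θ x y) (j : R) :
    ∑ c with θ c = j, (1 - ∑ v, y v c) = #{c | θ c = j} - x j := by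
  simp [sum_sub_distrib, hy.2.2.2 j]

theorem demand_le (hy : VOMFeasible V C R θ x y) (j : R) : x j ≤ #{c | θ c = j} := by
  have hnonneg := sum_nonneg fun c (_ : c ∈ ({c | θ c = j} : Finset C)) => hy.one_sub_sum_nonneg c
  rw [hy.sum_one_sub_sum, sub_nonneg] at hnonneg
  exact_mod_cast hnonneg

theorem cast_unmatchedCard (hy : VOMFeasible V C R θ x y) (j : R) :
    (unmatchedCard θ x j : ℝ) = ∑ c with θ c = j, (1 - ∑ v, y v c) := by
  rw [hy.sum_one_sub_sum, unmatchedCard, Nat.cast_sub (hy.demand_le j)]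

theorem dummyAssignment_nonneg (hy : VOMFeasible V C R θ x y) (d : DummyVehicle θ x) (c : C) :
    0 ≤ dummyAssignment θ x y d c := by
  unfold dummyAssignment
  split_ifs
  · exact div_nonneg (hy.one_sub_sum_nonneg c) (Nat.cast_nonneg _)
  · exact le_rfl

theorem sum_dummyAssignment_row (hy : VOMFeasible V C R θ x y) (d : DummyVehicle θ x) :
    ∑ c, dummyAssignment θ x y d c = 1 := by
  simp only [dummyAssignment]
  rw [← sum_filter, ← sum_div, ← hy.cast_unmatchedCard]
  exact div_self (Nat.cast_ne_zero.2 d.2.pos.ne')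

theorem sum_dummyAssignment_col (hy : VOMFeasible V C R θ x y) (c : C) :
    ∑ d, dummyAssignment θ x y d c = 1 - ∑ v, y v c := by
  have hzone : ∑ d, dummyAssignment θ x y d c =
      unmatchedCard θ x (θ c) * ((1 - ∑ v, y v c) / unmatchedCard θ x (θ c)) := by
    simp [dummyAssignment, Fintype.sum_sigma]
  rw [hzone]
  refine mul_div_cancel_of_imp' fun hzero => ?_
  rw [hy.cast_unmatchedCard, sum_eq_zero_iff_of_nonneg fun c _ => hy.one_sub_sum_nonneg c] at hzero
  exact hzero c (by simp)

theorem mem_convexHull_vomBinarySet (hy : VOMFeasible V C R θ x y) :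
    y ∈ convexHull ℝ (vomBinarySet V θ x) := by
  classical
  let Y : V ⊕ DummyVehicle θ x → C → ℝ := Sum.elim y (dummyAssignment θ x y)
  have hY := mem_convexHull_single_equiv_of_doublyStochastic (M := Y)
    (Sum.rec (fun v c => (hy.1 v c).1) hy.dummyAssignment_nonneg)
    (Sum.rec hy.2.2.1 hy.sum_dummyAssignment_row)
    (fun c => by simp [Y, Fintype.sum_sum_type, hy.sum_dummyAssignment_col])
  let restrict := LinearMap.funLeft ℝ (C → ℝ) (Sum.inl : V → V ⊕ DummyVehicle θ x)
  have hrestrict : y ∈ convexHull ℝ (restrict '' _) :=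
    restrict.image_convexHull _ ▸ Set.mem_image_of_mem restrict hY
  refine convexHull_mono ?_ hrestrict
  rintro _ ⟨_, ⟨σ, hσ, rfl⟩, rfl⟩
  have hzone : ∀ d, θ (σ (Sum.inr d)) = d.1 := fun d =>
    of_not_not fun hne => (hσ (Sum.inr d)).ne' (if_neg hne)
  exact single_mem_vomBinarySet (σ.injective.comp Sum.inl_injective)
    fun j => card_filter_inl_eq_demand (hy.demand_le j) hzone

end VOMFeasible

end VOM

/-- **Proposition 3, second part** (integrality of the VOM linear-programming
relaxation): if the feasible set is nonempty, then for every cost function the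
minimum of the LP relaxation is attained at a binary point; hence the optimal
solution of the binary matching problem VOM can be obtained by solving its
linear-programming relaxation. -/
theorem vom_lp_integral_optimum (V C R : Type*) [Fintype V] [Fintype C]
    [Fintype R] [DecidableEq R] (θ : C → R) (x : R → ℕ)
    (hne : ∃ y : V → C → ℝ, VOMFeasible V C R θ x y) :
    ∀ w : V → C → ℝ, ∃ ystar : V → C → ℝ,
      VOMFeasible V C R θ x ystar ∧
      (∀ v c, ystar v c = 0 ∨ ystar v c = 1) ∧
      ∀ y : V → C → ℝ, VOMFeasible V C R θ x y →
        ∑ v, ∑ c, w v c * ystar v c ≤ ∑ v, ∑ c, w v c * y v c := by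
  intro w
  obtain ⟨y₀, hy₀⟩ := hne
  obtain ⟨z, ⟨hz, hz_binary⟩, hz_min⟩ :=
    exists_forall_le_convexHull_of_concaveOn (𝕜 := ℝ) finite_vomBinarySet
      (convexHull_nonempty_iff.1 ⟨y₀, hy₀.mem_convexHull_vomBinarySet⟩)
      (((isLinearMap_sum_sum_mul w).mk' _).concaveOn (convex_convexHull ℝ _))
  exact ⟨z, hz, hz_binary, fun y hy => hz_min y hy.mem_convexHull_vomBinarySet⟩
end
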